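/- arXiv:math/0403092 — 6 statements merged into one kernel-verified Lean document; each statement's English description precedes it below -/
import Mathlib

section
/- The sequence A_n satisfies A_n ∼ √(π/2) · n^{n+1/2} as n → ∞; that is, the quotient A_n / n^{n+1/2} tends to √(π/2) as n tends to infinity. Equivalently, A_n/n! ∼ (1/2)·e^n. -/
open Real Filter

/-- `Aₙ = Σ_{p+s=n, p,s ≥ 1} (n!/(p!·s!)) pᵖ sˢ`, as a real number. -/
noncomputable def AseqR (n : ℕ) : ℝ :=
  ∑ p ∈ Finset.Ioo 0 n,
    (n.factorial : ℝ) / (p.factorial * (n - p).factorial) * p ^ p * (n - p) ^ (n - p)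

/-!
Dividing by `n! eⁿ` turns `Aₙ` into the self-convolution of `aₚ = pᵖ e⁻ᵖ / p!`, which by Stirling's
formula is asymptotic to `1 / √(2πp)`. The coefficients `bₚ = (1/2)(3/2)⋯(p - 1/2) / p!` of
`(1 - x)^(-1/2)` satisfy `bₚ ∼ 1 / √(πp)`, and their self-convolution is identically `1`, being the
coefficient sequence of `(1 - x)⁻¹`. Hence `a ∼ b / √2`. Convolution preserves asymptotic
equivalence of positive sequences as long as any fixed number of terms at either end contributes
negligibly to the sum, so the self-convolution of `a` tends to `1/2`; Stirling's formula for `n!`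
then gives the other normalisation.
-/

open Asymptotics Finset Topology

/-- The Cauchy product of two sequences: the coefficient sequence of the product of their generating
functions. -/
def cauchyProduct {R : Type*} [NonUnitalNonAssocSemiring R] (f g : ℕ → R) (n : ℕ) : R :=
  ∑ x ∈ antidiagonal n, f x.1 * g x.2

theorem cauchyProduct_comm {R : Type*} [NonUnitalCommSemiring R] (f g : ℕ → R) :
    cauchyProduct f g = cauchyProduct g f := by
  ext n
  rw [cauchyProduct, ← Nat.sum_antidiagonal_swap]
  exact sum_congr rfl fun x _ => mul_comm _ _

theorem cauchyProduct_sub_cauchyProduct {R : Type*} [NonUnitalNonAssocRing R] (f f' g g' : ℕ → R) :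
    cauchyProduct f f' - cauchyProduct g g' =
      cauchyProduct (f - g) f' + cauchyProduct g (f' - g') := by
  ext n
  simp only [cauchyProduct, Pi.sub_apply, Pi.add_apply, ← sum_sub_distrib, ← sum_add_distrib]
  exact sum_congr rfl fun x _ => by noncomm_ring

theorem cauchyProduct_div_div {K : Type*} [Semifield K] (f g : ℕ → K) (c d : K) (n : ℕ) :
    cauchyProduct (fun i => f i / c) (fun i => g i / d) n = cauchyProduct f g n / (c * d) := by
  simp only [cauchyProduct, div_mul_div_comm, sum_div]

theorem norm_cauchyProduct_le {R : Type*} [NonUnitalSeminormedRing R] {u v : ℕ → R} {c : ℕ → ℝ}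
    (h : ∀ n, ‖v n‖ ≤ c n) (n : ℕ) :
    ‖cauchyProduct u v n‖ ≤ cauchyProduct (fun i => ‖u i‖) c n :=
  norm_sum_le_of_le _ fun x _ =>
    (norm_mul_le _ _).trans (mul_le_mul_of_nonneg_left (h x.2) (norm_nonneg _))

theorem cauchyProduct_le_sum_range_add {f b c : ℕ → ℝ} (hf : 0 ≤ f) (hb : 0 ≤ b) (hc : 0 ≤ c)
    {δ : ℝ} (hδ : 0 ≤ δ) {N : ℕ} (hfb : ∀ k ≥ N, f k ≤ δ * b k) (n : ℕ) :
    cauchyProduct f c n ≤ ∑ k ∈ range N, f k * c (n - k) + δ * cauchyProduct b c n := by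
  have head : ∑ k ∈ range (n + 1) with k < N, f k * c (n - k) ≤
      ∑ k ∈ range N, f k * c (n - k) :=
    sum_le_sum_of_subset_of_nonneg (fun k hk => mem_range.2 (mem_filter.1 hk).2)
      fun k _ _ => mul_nonneg (hf k) (hc _)
  have tail : ∑ k ∈ range (n + 1) with ¬ k < N, f k * c (n - k) ≤ δ * cauchyProduct b c n := by
    rw [cauchyProduct, Nat.sum_antidiagonal_eq_sum_range_succ fun i j => b i * c j, mul_sum]
    calc ∑ k ∈ range (n + 1) with ¬ k < N, f k * c (n - k)
        ≤ ∑ k ∈ range (n + 1) with ¬ k < N, δ * (b k * c (n - k)) :=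
          sum_le_sum fun k hk => by
            rw [← mul_assoc]
            exact mul_le_mul_of_nonneg_right (hfb k (not_lt.1 (mem_filter.1 hk).2)) (hc _)
      _ ≤ ∑ k ∈ range (n + 1), δ * (b k * c (n - k)) :=
          sum_le_sum_of_subset_of_nonneg (filter_subset _ _)
            fun k _ _ => mul_nonneg hδ (mul_nonneg (hb k) (hc _))
  rw [cauchyProduct, Nat.sum_antidiagonal_eq_sum_range_succ fun i j => f i * c j,
    ← sum_filter_add_sum_filter_not _ (· < N)]
  exact add_le_add head tail

theorem isLittleO_cauchyProduct {R : Type*} [NonUnitalSeminormedRing R] {u v : ℕ → R} {b c : ℕ → ℝ}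
    (hu : u =o[atTop] b) (hv : v =O[⊤] c) (hb : 0 ≤ b) (hc : 0 ≤ c)
    (hshift : ∀ k, (fun n => c (n - k)) =o[atTop] cauchyProduct b c) :
    cauchyProduct u v =o[atTop] cauchyProduct b c := by
  rw [isLittleO_iff]
  intro ε hε
  obtain ⟨K, hK, hvK⟩ := hv.exists_pos
  have hvc : ∀ n, ‖v n‖ ≤ K * c n := fun n => by
    simpa only [Real.norm_of_nonneg (hc n)] using isBigOWith_top.1 hvK n
  obtain ⟨N, huN⟩ := eventually_atTop.1 (hu.bound (show 0 < ε / 2 / K by positivity))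
  have hub : ∀ k ≥ N, ‖u k‖ ≤ ε / 2 / K * b k := fun k hk => by
    simpa only [Real.norm_of_nonneg (hb k)] using huN k hk
  have head : (fun n => K * ∑ k ∈ range N, ‖u k‖ * c (n - k)) =o[atTop] cauchyProduct b c :=
    (IsLittleO.fun_sum fun k _ => (hshift k).const_mul_left ‖u k‖).const_mul_left K
  filter_upwards [head.bound (half_pos hε)] with n hn
  have hbc : 0 ≤ cauchyProduct b c n := sum_nonneg fun x _ => mul_nonneg (hb _) (hc _)
  rw [Real.norm_of_nonneg hbc] at hn ⊢
  calc ‖cauchyProduct u v n‖ ≤ cauchyProduct (fun i => ‖u i‖) (fun i => K * c i) n :=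
        norm_cauchyProduct_le hvc n
    _ = K * cauchyProduct (fun i => ‖u i‖) c n := by
        simp only [cauchyProduct, mul_sum, mul_left_comm]
    _ ≤ K * (∑ k ∈ range N, ‖u k‖ * c (n - k) + ε / 2 / K * cauchyProduct b c n) :=
        mul_le_mul_of_nonneg_left (cauchyProduct_le_sum_range_add (fun _ => norm_nonneg _) hb hc
          (by positivity) hub n) hK.le
    _ = K * ∑ k ∈ range N, ‖u k‖ * c (n - k) + ε / 2 * cauchyProduct b c n := by field_simp
    _ ≤ ε / 2 * cauchyProduct b c n + ε / 2 * cauchyProduct b c n :=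
        add_le_add_left ((Real.le_norm_self _).trans hn) _
    _ = ε * cauchyProduct b c n := by ring

theorem isEquivalent_cauchyProduct {a a' b b' : ℕ → ℝ} (h : a ~[atTop] b) (h' : a' ~[atTop] b')
    (hb : ∀ n, 0 < b n) (hb' : ∀ n, 0 < b' n)
    (hshift : ∀ k, (fun n => b (n - k)) =o[atTop] cauchyProduct b b')
    (hshift' : ∀ k, (fun n => b' (n - k)) =o[atTop] cauchyProduct b b') :
    cauchyProduct a a' ~[atTop] cauchyProduct b b' := by
  have ha' : a' =O[⊤] b' :=
    isBigO_top.2 ((isBigO_nat_atTop_iff fun n hn => absurd hn (hb' n).ne').1 h'.isBigO)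
  rw [cauchyProduct_comm b b'] at hshift
  have left : cauchyProduct (a - b) a' =o[atTop] cauchyProduct b b' :=
    isLittleO_cauchyProduct h.isLittleO ha' (fun n => (hb n).le) (fun n => (hb' n).le) hshift'
  have right : cauchyProduct (a' - b') b =o[atTop] cauchyProduct b' b :=
    isLittleO_cauchyProduct h'.isLittleO (isBigO_refl b ⊤) (fun n => (hb' n).le)
      (fun n => (hb n).le) hshift
  rw [cauchyProduct_comm, cauchyProduct_comm b' b] at right
  rw [IsEquivalent, cauchyProduct_sub_cauchyProduct]
  exact left.add right

theorem cauchyProduct_multichoose {R : Type*} [CommRing R] [BinomialRing R] (r s : R) :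
    cauchyProduct (Ring.multichoose r) (Ring.multichoose s) = Ring.multichoose (r + s) := by
  have multichoose_eq (t : R) (k : ℕ) :
      Ring.multichoose t k = (-1) ^ k * Ring.choose (-t) k := by
    rw [Ring.choose_neg', Int.negOnePow_def, Units.smul_def]
    simp [← mul_assoc, ← mul_pow]
  ext n
  rw [multichoose_eq, neg_add, Ring.add_choose_eq n (Commute.all _ _), mul_sum]
  refine sum_congr rfl fun x hx => ?_
  rw [multichoose_eq, multichoose_eq, ← mem_antidiagonal.1 hx, pow_add]
  ring

theorem factorial_mul_multichoose {R : Type*} [CommRing R] [BinomialRing R] (r : R) (n : ℕ) :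
    n.factorial * Ring.multichoose r n = ∏ j ∈ range n, (r + j) := by
  rw [← nsmul_eq_mul, Ring.factorial_nsmul_multichoose_eq_ascPochhammer,
    Polynomial.ascPochhammer_smeval_eq_eval]
  induction n with
  | zero => simp
  | succ n ih => rw [ascPochhammer_succ_eval, ih, prod_range_succ]

theorem multichoose_pos {s : ℝ} (hs : 0 < s) (n : ℕ) : 0 < Ring.multichoose s n := by
  have h : 0 < n.factorial * Ring.multichoose s n := by
    rw [factorial_mul_multichoose]
    exact prod_pos fun j _ => by positivity
  exact pos_of_mul_pos_right h (by positivity)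

theorem isEquivalent_multichoose {s : ℝ} (hs : ∀ m : ℕ, s ≠ -m) :
    Ring.multichoose s ~[atTop] fun n : ℕ => (n : ℝ) ^ (s - 1) / Real.Gamma s := by
  have hΓ : Real.Gamma s ≠ 0 := Real.Gamma_ne_zero hs
  have key : Tendsto (fun n : ℕ => Real.Gamma s * ((n : ℝ) / (n + s) / Real.GammaSeq s n)) atTop
      (𝓝 1) := by
    simpa [hΓ] using ((tendsto_natCast_div_add_atTop s).div
      (Real.GammaSeq_tendsto_Gamma s) hΓ).const_mul (Real.Gamma s)
  refine isEquivalent_of_tendsto_one (key.congr' ?_)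
  filter_upwards [eventually_gt_atTop 0] with n hn
  have hn' : (0 : ℝ) < n := Nat.cast_pos.2 hn
  have hsn : s + n ≠ 0 := fun h => hs n (eq_neg_of_add_eq_zero_left h)
  have : (n : ℝ) ^ s ≠ 0 := (Real.rpow_pos_of_pos hn' s).ne'
  simp only [Pi.div_apply]
  rw [Real.GammaSeq, prod_range_succ, ← factorial_mul_multichoose, Real.rpow_sub_one hn'.ne',
    add_comm (n : ℝ) s]
  field_simp

theorem isEquivalent_multichoose_one_half :
    Ring.multichoose (1 / 2 : ℝ) ~[atTop] fun n : ℕ => (√(π * n))⁻¹ := by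
  have h := isEquivalent_multichoose (s := 1 / 2) fun m => by
    have : (0 : ℝ) ≤ m := m.cast_nonneg
    linarith
  refine h.congr_right (.of_forall fun n => ?_)
  beta_reduce
  rw [Real.Gamma_one_half_eq, show (1 / 2 - 1 : ℝ) = -(1 / 2) by norm_num,
    Real.rpow_neg n.cast_nonneg, ← Real.sqrt_eq_rpow, Real.sqrt_mul Real.pi_pos.le]
  field_simp

theorem tendsto_multichoose_one_half :
    Tendsto (Ring.multichoose (1 / 2 : ℝ)) atTop (𝓝 0) :=
  isEquivalent_multichoose_one_half.symm.tendsto_nhds <| tendsto_inv_atTop_zero.comp <|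
    Real.tendsto_sqrt_atTop.comp <| tendsto_natCast_atTop_atTop.const_mul_atTop Real.pi_pos

theorem tendsto_factorial_mul_exp_div_rpow :
    Tendsto (fun n : ℕ => n.factorial * exp n / (n : ℝ) ^ ((n : ℝ) + 1 / 2)) atTop
      (𝓝 √(2 * π)) := by
  rw [Real.sqrt_mul zero_le_two]
  refine (Stirling.tendsto_stirlingSeq_sqrt_pi.const_mul √2).congr' ?_
  filter_upwards [eventually_gt_atTop 0] with n hn
  have hn' : (0 : ℝ) < n := Nat.cast_pos.2 hn
  rw [Stirling.stirlingSeq, Real.rpow_add hn', Real.rpow_natCast, ← Real.sqrt_eq_rpow,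
    Real.sqrt_mul zero_le_two, div_pow, ← Real.exp_nat_mul, mul_one]
  field_simp

/-- The mass `pᵖ e⁻ᵖ / p!` of the Poisson distribution of mean `p` at `p`, set to `0` at `p = 0`
because `AseqR` omits the terms with `p = 0` or `s = 0`. -/
noncomputable def poissonPeak (p : ℕ) : ℝ :=
  if p = 0 then 0 else (p : ℝ) ^ p / p.factorial / exp p

theorem isEquivalent_poissonPeak : poissonPeak ~[atTop] fun p : ℕ => (√(2 * π * p))⁻¹ := by
  have h2π : √(2 * π) ≠ 0 := by positivity
  have key : Tendsto (fun p : ℕ => √(2 * π) / (p.factorial * exp p / (p : ℝ) ^ ((p : ℝ) + 1 / 2)))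
      atTop (𝓝 1) := by
    have h := (tendsto_const_nhds (x := √(2 * π))).div tendsto_factorial_mul_exp_div_rpow h2π
    rwa [div_self h2π] at h
  refine isEquivalent_of_tendsto_one (key.congr' ?_)
  filter_upwards [eventually_gt_atTop 0] with p hp
  have hp' : (0 : ℝ) < p := Nat.cast_pos.2 hp
  rw [Pi.div_apply, poissonPeak, if_neg hp.ne', Real.sqrt_mul (by positivity) (p : ℝ),
    Real.rpow_add hp', Real.rpow_natCast, ← Real.sqrt_eq_rpow]
  field_simp

theorem tendsto_cauchyProduct_poissonPeak :
    Tendsto (cauchyProduct poissonPeak poissonPeak) atTop (𝓝 (1 / 2)) := by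
  set b : ℕ → ℝ := fun n => Ring.multichoose (1 / 2 : ℝ) n / √2 with hb
  have equiv : poissonPeak ~[atTop] b := by
    refine isEquivalent_poissonPeak.trans (IsEquivalent.symm ?_)
    have refl_const : (fun _ : ℕ => √2) ~[atTop] fun _ => √2 := IsEquivalent.refl
    refine (isEquivalent_multichoose_one_half.div refl_const).congr_right (.of_forall fun n => ?_)
    simp only [Pi.div_apply]
    rw [mul_assoc, Real.sqrt_mul zero_le_two, mul_inv_rev, div_eq_mul_inv]
  have pos (n : ℕ) : 0 < b n := div_pos (multichoose_pos one_half_pos n) (by positivity)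
  have conv : cauchyProduct b b = fun _ => 1 / 2 := by
    ext n
    rw [hb, cauchyProduct_div_div, cauchyProduct_multichoose, add_halves, Ring.multichoose_one,
      Real.mul_self_sqrt zero_le_two]
  have shift (k : ℕ) : (fun n => b (n - k)) =o[atTop] cauchyProduct b b := by
    rw [conv, isLittleO_const_iff one_half_pos.ne']
    have tendsto_b : Tendsto b atTop (𝓝 0) := by
      simpa only [zero_div] using tendsto_multichoose_one_half.div_const √2
    exact tendsto_b.comp (tendsto_sub_atTop_nat k)
  exact (conv ▸ isEquivalent_cauchyProduct equiv equiv pos pos shift shift).tendsto_const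

theorem AseqR_div_factorial_div_exp (n : ℕ) :
    AseqR n / n.factorial / exp n = cauchyProduct poissonPeak poissonPeak n := by
  rw [cauchyProduct,
    Nat.sum_antidiagonal_eq_sum_range_succ fun i j => poissonPeak i * poissonPeak j,
    AseqR, sum_div, sum_div]
  have sub : Ioo 0 n ⊆ range (n + 1) := fun p hp =>
    mem_range.2 ((mem_Ioo.1 hp).2.trans n.lt_succ_self)
  refine sum_subset_zero_on_sdiff sub (fun p hp => ?_) fun p hp => ?_
  · simp only [Finset.mem_sdiff, mem_range, mem_Ioo] at hp
    obtain rfl | h : p = 0 ∨ n - p = 0 := by omega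
    · simp [poissonPeak]
    · simp [poissonPeak, h]
  · obtain ⟨hp0, hpn⟩ := mem_Ioo.1 hp
    rw [poissonPeak, poissonPeak, if_neg hp0.ne', if_neg (Nat.sub_ne_zero_of_lt hpn),
      Nat.cast_sub hpn.le, Real.exp_sub]
    field_simp

/-- `Aₙ ∼ √(π/2) · n^{n+1/2}` as `n → ∞`; equivalently `Aₙ/n! ∼ (1/2)·eⁿ`. -/
theorem Aseq_asymptotic :
    Tendsto (fun n : ℕ => AseqR n / (n : ℝ) ^ ((n : ℝ) + 1 / 2)) atTop
      (nhds (Real.sqrt (Real.pi / 2))) ∧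
    Tendsto (fun n : ℕ => AseqR n / n.factorial / Real.exp n) atTop (nhds (1 / 2)) := by
  have exp_form : Tendsto (fun n : ℕ => AseqR n / n.factorial / exp n) atTop (𝓝 (1 / 2)) := by
    simpa only [AseqR_div_factorial_div_exp] using tendsto_cauchyProduct_poissonPeak
  have const_eq : 1 / 2 * √(2 * π) = √(π / 2) := by
    rw [show π / 2 = (1 / 2) ^ 2 * (2 * π) by ring, Real.sqrt_mul (by positivity) (2 * π),
      Real.sqrt_sq one_half_pos.le]
  refine ⟨?_, exp_form⟩
  rw [← const_eq]
  refine (exp_form.mul tendsto_factorial_mul_exp_div_rpow).congr fun n => ?_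
  field_simp
end

section
/- For every natural number k ≥ 0, the formal power series Σ_{n≥1} (p_{n,k}/n!) q^n equals Z^{k+1}, where Z = Σ_{n≥1} (n^n/n!) q^n. -/
/-- `Z = Σ_{n≥1} (nⁿ/n!) qⁿ` as a formal power series over `ℚ`. -/
noncomputable def Zq : PowerSeries ℚ :=
  PowerSeries.mk fun n => if n = 0 then 0 else (n : ℚ) ^ n / n.factorial

open Classical in
/-- `p_{n,k} = Σ_T Σ_{(a,b)} C(l_T(a,b), k)`, summed over all Cayley trees `T` on `n`
vertices (connected acyclic simple graphs on `{1,…,n}`) and all ordered pairs `(a,b)`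
of vertices, where `l_T(a,b)` is the graph distance. -/
noncomputable def pCayley (n k : ℕ) : ℕ :=
  ∑ G ∈ Finset.univ.filter (fun G : SimpleGraph (Fin n) => G.Connected ∧ G.IsAcyclic),
    ∑ a : Fin n, ∑ b : Fin n, (G.dist a b).choose k

/-!
Orient a Cayley tree towards a vertex `b`: it becomes the parent function `f` of a forest with root
set `{b}`, and the distance from `a` to `b` is the time at which the `f`-orbit of `a` arrives at
`b`. Turning the vertices of the path from `a` to `b` into roots one after the other, a triple
`(T, a, b)` with `l_T(a, b) = l` becomes a forest with `l + 1` roots listed in order. There are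
`r n^{n-r-1}` forests with `r` prescribed roots: cutting the edge above a vertex `v` leaves a
forest with one more root and a vertex outside the tree of `v`, and by symmetry all trees of a
random forest have the same expected size.

Let `T` be the compositional inverse of `X e^{-X}`. Then `[qⁿ] T^r = r n^{n-r-1} / (n-r)!`, so that
`Σ (p_{n,k}/n!) qⁿ = Σ_l C(l,k) T^{l+1} = (T/(1-T))^{k+1}`. Differentiating `T e^{-T} = X` gives
`T/(1-T) = X dT/dX`, which is `Z`.
-/

open Function

section Iterate
variable {α : Type*} {f : α → α}

lemma eq_of_iterate_eq_of_isFixedPt {x c d : α} {m k : ℕ} (hc : IsFixedPt f c)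
    (hd : IsFixedPt f d) (hm : f^[m] x = c) (hk : f^[k] x = d) : c = d :=
  calc c = f^[k] c := (hc.iterate k).symm
    _ = f^[m] d := by rw [← hm, ← hk, ← iterate_add_apply, ← iterate_add_apply, add_comm]
    _ = d := hd.iterate m

variable [DecidableEq α]

lemma iterate_update_of_forall_ne {c w x : α} {m : ℕ} (h : ∀ k < m, f^[k] x ≠ c) :
    (update f c w)^[m] x = f^[m] x := by
  induction m with
  | zero => rfl
  | succ m ih =>
    rw [iterate_succ_apply', iterate_succ_apply', ih fun k hk => h k (by omega),
      update_of_ne (h m (by omega))]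

lemma exists_iterate_update_mem_insert {S : Finset α} {x : α} (h : ∃ m, f^[m] x ∈ S) (c w : α) :
    ∃ m, (update f c w)^[m] x ∈ insert c S := by
  have hit : ∃ m, f^[m] x ∈ insert c S := h.imp fun _ => Finset.mem_insert_of_mem
  obtain ⟨N, hN, hmin⟩ := Nat.findX hit
  exact ⟨N, by rwa [iterate_update_of_forall_ne fun k hk hc => hmin k hk (by simp [hc])]⟩

end Iterate

/-- `IsRootedForest R f` says that `f` is the parent function of a forest on `V` with root set `R`:
the roots are encoded as fixed points, and every orbit of `f` ends in `R`. -/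
structure IsRootedForest {V : Type*} (R : Finset V) (f : V → V) : Prop where
  isFixedPt : ∀ r ∈ R, IsFixedPt f r
  reaches : ∀ v, ∃ m, f^[m] v ∈ R

namespace IsRootedForest
variable {V : Type*} [DecidableEq V] {R : Finset V} {f : V → V} {v w : V}

lemma cut (hf : IsRootedForest R f) (v : V) : IsRootedForest (insert v R) (update f v v) where
  isFixedPt r hr := by
    obtain rfl | hne := eq_or_ne r v
    · exact update_self ..
    · exact (update_of_ne hne ..).trans (hf.isFixedPt r (Finset.mem_of_mem_insert_of_ne hr hne))
  reaches x := exists_iterate_update_mem_insert (hf.reaches x) v v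

-- Before reaching `R`, an orbit cannot return to `v`, so deleting the edge at `v` is harmless.
lemma reaches_cut (hf : IsRootedForest R f) (hv : v ∉ R) :
    ∃ m, (update f v v)^[m] (f v) ∈ R := by
  obtain ⟨N, hN, hmin⟩ := Nat.findX (hf.reaches v)
  obtain _ | N := N
  · exact absurd hN hv
  refine ⟨N, ?_⟩
  rwa [iterate_update_of_forall_ne, ← iterate_succ_apply]
  intro k hk hreturn
  refine hmin (N - k) (by omega) ?_
  rwa [← hreturn, ← iterate_succ_apply, ← iterate_add_apply, show N - k + (k + 1) = N + 1 by omega]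

lemma attach {g : V → V} (hg : IsRootedForest (insert v R) g) (hv : v ∉ R)
    (hw : ∃ m, g^[m] w ∈ R) : IsRootedForest R (update g v w) where
  isFixedPt r hr := by
    rw [IsFixedPt, update_of_ne (ne_of_mem_of_not_mem hr hv)]
    exact hg.isFixedPt r (Finset.mem_insert_of_mem hr)
  reaches x := by
    obtain ⟨k, hk⟩ := hw
    have avoids (i : ℕ) : g^[i] w ≠ v := fun hi => hv <| by
      rwa [eq_of_iterate_eq_of_isFixedPt (hg.isFixedPt v (by simp))
        (hg.isFixedPt _ (Finset.mem_insert_of_mem hk)) hi rfl]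
    obtain ⟨m, hm⟩ := exists_iterate_update_mem_insert (hg.reaches x) v w
    rw [Finset.insert_idem, Finset.mem_insert] at hm
    obtain hm | hm := hm
    · refine ⟨k + 1 + m, ?_⟩
      rwa [iterate_add_apply, hm, iterate_succ_apply, update_self,
        iterate_update_of_forall_ne fun i _ => avoids i]
    · exact ⟨m, hm⟩

end IsRootedForest

section Depth
variable {V : Type*} {R : Finset V} {f : V → V} {a c : V} {l : ℕ}

/-- The number of steps that the orbit of `a` under the parent function `f` takes to reach `R`
(the junk value `0` if it never does). -/
noncomputable def rootDepth (f : V → V) (R : Finset V) (a : V) : ℕ := sInf {m | f^[m] a ∈ R}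

/-- The element of `R` at which the orbit of `a` under the parent function `f` arrives. -/
noncomputable def rootOf (f : V → V) (R : Finset V) (a : V) : V := f^[rootDepth f R a] a

lemma rootDepth_of_mem (ha : a ∈ R) : rootDepth f R a = 0 :=
  Nat.sInf_eq_zero.2 (.inl ha)

lemma notMem_of_lt_rootDepth {m : ℕ} (hm : m < rootDepth f R a) : f^[m] a ∉ R :=
  Nat.notMem_of_lt_sInf hm

namespace IsRootedForest

lemma rootOf_mem (hf : IsRootedForest R f) (a : V) : rootOf f R a ∈ R :=
  Nat.sInf_mem (hf.reaches a)

lemma rootDepth_eq_iff (hf : IsRootedForest R f) :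
    rootDepth f R a = l ↔ f^[l] a ∈ R ∧ ∀ m < l, f^[m] a ∉ R := by
  constructor
  · rintro rfl
    exact ⟨hf.rootOf_mem a, fun m => notMem_of_lt_rootDepth⟩
  · rintro ⟨hl, hlt⟩
    exact le_antisymm (Nat.sInf_le hl) (not_lt.1 fun h => hlt _ h (hf.rootOf_mem a))

lemma rootDepth_eq_rootDepth_apply_add_one (hf : IsRootedForest R f) (ha : a ∉ R) :
    rootDepth f R a = rootDepth f R (f a) + 1 := by
  refine hf.rootDepth_eq_iff.2 ⟨hf.rootOf_mem (f a), ?_⟩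
  rintro (_ | m) hm
  · exact ha
  · exact notMem_of_lt_rootDepth (a := f a) (Nat.lt_of_succ_lt_succ hm)

lemma rootOf_eq_iff (hf : IsRootedForest R f) (hc : c ∈ R) :
    rootOf f R a = c ↔ ∃ m, f^[m] a = c :=
  ⟨fun h => ⟨_, h⟩, fun ⟨_, hm⟩ => eq_of_iterate_eq_of_isFixedPt
    (hf.isFixedPt _ (hf.rootOf_mem a)) (hf.isFixedPt c hc) rfl hm⟩

lemma rootDepth_eq_and_rootOf_eq_iff (hf : IsRootedForest R f) (hc : c ∈ R) :
    rootDepth f R a = l ∧ rootOf f R a = c ↔ f^[l] a = c ∧ ∀ m < l, f^[m] a ∉ R := by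
  constructor
  · rintro ⟨rfl, hroot⟩
    exact ⟨hroot, fun m => notMem_of_lt_rootDepth⟩
  · rintro ⟨rfl, hlt⟩
    have hdepth := hf.rootDepth_eq_iff.2 ⟨hc, hlt⟩
    exact ⟨hdepth, by rw [rootOf, hdepth]⟩

end IsRootedForest
end Depth

section Conj
variable {V W : Type*} {R : Finset V} {f : V → V}

lemma iterate_conj_apply (σ : V ≃ W) (f : V → V) (m : ℕ) (a : V) :
    (σ.conj f)^[m] (σ a) = σ (f^[m] a) :=
  ((show Semiconj σ f (σ.conj f) from fun x => by simp [Equiv.conj_apply]).iterate_right m a).symm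

lemma rootDepth_conj (σ : V ≃ W) (f : V → V) (R : Finset V) (a : V) :
    rootDepth (σ.conj f) (R.map σ.toEmbedding) (σ a) = rootDepth f R a := by
  simp [rootDepth, iterate_conj_apply]

lemma rootOf_conj (σ : V ≃ W) (f : V → V) (R : Finset V) (a : V) :
    rootOf (σ.conj f) (R.map σ.toEmbedding) (σ a) = σ (rootOf f R a) := by
  rw [rootOf, rootOf, rootDepth_conj, iterate_conj_apply]

lemma isRootedForest_conj_iff (σ : V ≃ W) :
    IsRootedForest (R.map σ.toEmbedding) (σ.conj f) ↔ IsRootedForest R f := by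
  constructor
  · intro h
    refine ⟨fun r hr => ?_, fun a => ?_⟩
    · simpa [IsFixedPt, Equiv.conj_apply] using h.isFixedPt (σ r) (by simpa using hr)
    · simpa [iterate_conj_apply] using h.reaches (σ a)
  · intro h
    refine ⟨?_, σ.surjective.forall.2 fun a => ?_⟩
    · simpa only [Finset.forall_mem_map, Equiv.coe_toEmbedding, IsFixedPt, Equiv.conj_apply,
        Equiv.symm_apply_apply, σ.injective.eq_iff] using h.isFixedPt
    · simpa [iterate_conj_apply] using h.reaches a
end Conj

section Counting
open Finset
variable {V : Type*} [Fintype V] [DecidableEq V] {R : Finset V} {f : V → V} {a c u v : V} {l : ℕ}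

open Classical in
/-- The parent functions of all forests on `V` with root set `R`. -/
noncomputable def rootedForests (R : Finset V) : Finset (V → V) := {f | IsRootedForest R f}

/-- The forests with root set `R`, together with a vertex of the tree rooted at `c`. -/
noncomputable def rootPairs (R : Finset V) (c : V) : Finset ((V → V) × V) :=
  {p ∈ rootedForests R ×ˢ univ | rootOf p.1 R p.2 = c}

/-- The forests with root set `R`, together with a vertex at depth `l` of the tree rooted at `c`. -/
noncomputable def depthPairs (R : Finset V) (c : V) (l : ℕ) : Finset ((V → V) × V) :=
  {p ∈ rootPairs R c | rootDepth p.1 R p.2 = l}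

@[simp]
lemma mem_rootedForests : f ∈ rootedForests R ↔ IsRootedForest R f := by
  simp [rootedForests]

@[simp]
lemma mem_rootPairs : (f, a) ∈ rootPairs R c ↔ IsRootedForest R f ∧ rootOf f R a = c := by
  simp [rootPairs]

lemma mem_depthPairs (hc : c ∈ R) :
    (f, a) ∈ depthPairs R c l ↔ IsRootedForest R f ∧ f^[l] a = c ∧ ∀ m < l, f^[m] a ∉ R := by
  rw [depthPairs, mem_filter, mem_rootPairs, and_assoc]
  exact and_congr_right fun hf => by rw [← hf.rootDepth_eq_and_rootOf_eq_iff hc, and_comm]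

lemma card_rootPairs_map (σ : Equiv.Perm V) (R : Finset V) (c : V) :
    #(rootPairs (R.map σ.toEmbedding) (σ c)) = #(rootPairs R c) := by
  refine (card_equiv (σ.conj.prodCongr σ) fun p => ?_).symm
  simp [rootPairs, rootOf_conj, isRootedForest_conj_iff]

lemma card_rootPairs_eq (hc : c ∈ R) (hu : u ∈ R) : #(rootPairs R c) = #(rootPairs R u) := by
  have hR : R.map (Equiv.swap c u).toEmbedding = R :=
    map_perm fun x hx => by
      rcases (Equiv.swap_apply_ne_self_iff.1 hx).2 with rfl | rfl <;> assumption
  simpa [hR] using (card_rootPairs_map (Equiv.swap c u) R c).symm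

lemma sum_card_rootPairs (R : Finset V) :
    ∑ c ∈ R, #(rootPairs R c) = #(rootedForests R) * Fintype.card V := by
  rw [← card_univ, ← card_product]
  refine (card_eq_sum_card_fiberwise fun p hp => ?_).symm
  simp only [coe_product, Set.mem_prod, mem_coe, mem_rootedForests] at hp
  exact hp.1.rootOf_mem p.2

-- Cut the edge from `v` to its parent, remembering the parent.
lemma card_rootedForests_eq_sum_card_rootPairs (hv : v ∉ R) :
    #(rootedForests R) = ∑ c ∈ R, #(rootPairs (insert v R) c) := by
  rw [← card_sigma]
  refine card_bij'
    (fun f _ => ⟨rootOf (update f v v) (insert v R) (f v), update f v v, f v⟩)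
    (fun p _ => update p.2.1 v p.2.2) ?_ ?_ ?_ ?_
  · intro f hf
    rw [mem_rootedForests] at hf
    obtain ⟨m, hm⟩ := hf.reaches_cut hv
    simp [hf.cut v, ((hf.cut v).rootOf_eq_iff (mem_insert_of_mem hm)).2 ⟨m, rfl⟩, hm]
  · rintro ⟨c, g, w⟩ hp
    simp only [mem_sigma, mem_rootPairs] at hp
    obtain ⟨hc, hg, hw⟩ := hp
    obtain ⟨m, hm⟩ := (hg.rootOf_eq_iff (mem_insert_of_mem hc)).1 hw
    exact mem_rootedForests.2 (hg.attach hv ⟨m, hm ▸ hc⟩)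
  · simp
  · rintro ⟨c, g, w⟩ hp
    simp only [mem_sigma, mem_rootPairs] at hp
    obtain ⟨hc, hg, rfl⟩ := hp
    have hgv : g v = v := hg.isFixedPt v (mem_insert_self v R)
    have hcut : update g v v = g := update_eq_self_iff.2 hgv.symm
    simp [hcut]

lemma succ_card_mul_card_rootedForests (hv : v ∉ R) :
    (#R + 1) * #(rootedForests R) = #R * (#(rootedForests (insert v R)) * Fintype.card V) := by
  have symm (c) (hc : c ∈ insert v R) := card_rootPairs_eq hc (mem_insert_self v R)
  rw [card_rootedForests_eq_sum_card_rootPairs hv, ← sum_card_rootPairs, sum_congr rfl symm,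
    sum_congr rfl fun c hc => symm c (mem_insert_of_mem hc)]
  simp only [sum_const, smul_eq_mul, card_insert_of_notMem hv]
  ring

lemma rootedForests_univ : rootedForests (univ : Finset V) = {id} := by
  ext f
  simp only [mem_rootedForests, mem_singleton]
  constructor
  · exact fun hf => funext fun v => hf.isFixedPt v (mem_univ v)
  · rintro rfl
    exact ⟨fun _ _ => rfl, fun v => ⟨0, mem_univ _⟩⟩

-- Multiplied through by `|V|` so that no exponent is negative when `R = univ`.
theorem card_mul_card_rootedForests (R : Finset V) :
    Fintype.card V * #(rootedForests R) = #R * Fintype.card V ^ (Fintype.card V - #R) := by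
  induction hd : Fintype.card V - #R generalizing R with
  | zero =>
    obtain rfl : R = univ := eq_univ_of_card R (by have := card_le_univ R; omega)
    simp [rootedForests_univ]
  | succ d ih =>
    obtain ⟨v, hv⟩ : ∃ v, v ∉ R := by
      by_contra! hall
      simp [eq_univ_of_forall hall] at hd
    have hins := card_insert_of_notMem hv
    refine Nat.eq_of_mul_eq_mul_left (Nat.succ_pos #R) ?_
    calc (#R + 1) * (Fintype.card V * #(rootedForests R))
        = #R * Fintype.card V * (Fintype.card V * #(rootedForests (insert v R))) := by
          rw [mul_left_comm, succ_card_mul_card_rootedForests hv]; ring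
      _ = (#R + 1) * (#R * Fintype.card V ^ (d + 1)) := by
          rw [ih (insert v R) (by omega), hins]; ring

lemma depthPairs_zero (hc : c ∈ R) : depthPairs R c 0 = rootedForests R ×ˢ {c} := by
  ext ⟨f, a⟩
  simp [mem_depthPairs hc, eq_comm]

lemma cut_mem_depthPairs (hc : c ∈ R) (h : (f, a) ∈ depthPairs R c (l + 1)) (hu : f^[l] a = u) :
    u ∉ R ∧ (update f u u, a) ∈ depthPairs (insert u R) u l := by
  obtain ⟨hf, hfc, hlt⟩ := (mem_depthPairs hc).1 h
  have hne (m) (hm : m < l) : f^[m] a ≠ u := fun h => by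
    refine hlt (m + 1) (by omega) ?_
    rwa [iterate_succ_apply', h, ← hu, ← iterate_succ_apply' f, hfc]
  have hiter (m) (hm : m ≤ l) : (update f u u)^[m] a = f^[m] a :=
    iterate_update_of_forall_ne fun k hk => hne k (by omega)
  refine ⟨hu ▸ hlt l (by omega), (mem_depthPairs (mem_insert_self u R)).2
    ⟨hf.cut u, (hiter l le_rfl).trans hu, fun m hm => ?_⟩⟩
  rw [hiter m hm.le, mem_insert, not_or]
  exact ⟨hne m hm, hlt m (by omega)⟩

lemma attach_mem_depthPairs (hc : c ∈ R) (hu : u ∉ R)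
    (h : (f, a) ∈ depthPairs (insert u R) u l) :
    (update f u c, a) ∈ depthPairs R c (l + 1) ∧ (update f u c)^[l] a = u := by
  simp only [mem_depthPairs (mem_insert_self _ R), mem_insert, not_or] at h
  obtain ⟨hf, hfu, hlt⟩ := h
  have hiter (m) (hm : m ≤ l) : (update f u c)^[m] a = f^[m] a :=
    iterate_update_of_forall_ne fun k hk => (hlt k (by omega)).1
  have hl : (update f u c)^[l] a = u := (hiter l le_rfl).trans hfu
  refine ⟨(mem_depthPairs hc).2 ⟨hf.attach hu ⟨0, hc⟩, ?_, fun m hm => ?_⟩, hl⟩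
  · rw [iterate_succ_apply', hl, update_self]
  · obtain hm | rfl := Nat.lt_succ_iff_lt_or_eq.1 hm
    · rw [hiter m hm.le]
      exact (hlt m hm).2
    · rwa [hl]

-- Peel off the last vertex `u` before the root `c`: making `u` a root shortens the path by one.
lemma card_depthPairs_succ (hc : c ∈ R) (l : ℕ) :
    #(depthPairs R c (l + 1)) = ∑ u ∈ Rᶜ, #(depthPairs (insert u R) u l) := by
  rw [← card_sigma]
  refine card_bij' (fun p _ => ⟨p.1^[l] p.2, update p.1 (p.1^[l] p.2) (p.1^[l] p.2), p.2⟩)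
    (fun q _ => (update q.2.1 q.1 c, q.2.2)) ?_ ?_ ?_ ?_
  · rintro ⟨f, a⟩ hp
    simpa using cut_mem_depthPairs hc hp rfl
  · rintro ⟨u, f, a⟩ hq
    rw [mem_sigma, mem_compl] at hq
    exact (attach_mem_depthPairs hc hq.1 hq.2).1
  · rintro ⟨f, a⟩ hp
    obtain ⟨-, hfc, -⟩ := (mem_depthPairs hc).1 hp
    simp [← hfc, iterate_succ_apply']
  · rintro ⟨u, f, a⟩ hq
    rw [mem_sigma, mem_compl] at hq
    obtain ⟨hf, -⟩ := (mem_depthPairs (mem_insert_self u R)).1 hq.2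
    have hfu : f u = u := hf.isFixedPt u (mem_insert_self u R)
    simp [(attach_mem_depthPairs hc hq.1 hq.2).2, hfu]

theorem card_mul_card_depthPairs (hc : c ∈ R) (l : ℕ) :
    Fintype.card V * #(depthPairs R c l) = (Fintype.card V - #R).descFactorial l *
      ((#R + l) * Fintype.card V ^ (Fintype.card V - (#R + l))) := by
  induction l generalizing R c with
  | zero => simp [depthPairs_zero hc, card_mul_card_rootedForests]
  | succ l ih =>
    have hins (u) (hu : u ∈ Rᶜ) : #(insert u R) = #R + 1 :=
      card_insert_of_notMem (mem_compl.1 hu)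
    have hdesc : (Fintype.card V - #R) * (Fintype.card V - (#R + 1)).descFactorial l =
        (Fintype.card V - #R).descFactorial (l + 1) := by
      rw [← Nat.sub_sub]
      cases Fintype.card V - #R
      · simp
      · exact (Nat.succ_descFactorial_succ _ _).symm
    rw [card_depthPairs_succ hc, mul_sum, sum_congr rfl fun u hu => by
      rw [ih (mem_insert_self u R), hins u hu], sum_const, card_compl, smul_eq_mul, ← mul_assoc,
      hdesc, add_right_comm, add_assoc]

end Counting

section ParentGraph
open Finset
variable {V : Type*} {R : Finset V} {f : V → V} {a b x y : V}

/-- The simple graph joining each vertex to its image under the parent function `f`; the loops at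
the fixed points of `f` are dropped. -/
def parentGraph (f : V → V) : SimpleGraph V := SimpleGraph.fromRel fun x y => f x = y

lemma parentGraph_adj : (parentGraph f).Adj x y ↔ x ≠ y ∧ (f x = y ∨ f y = x) := Iff.rfl

lemma adj_parentGraph_apply (h : f x ≠ x) : (parentGraph f).Adj x (f x) :=
  parentGraph_adj.2 ⟨h.symm, .inl rfl⟩

lemma edgeSet_parentGraph_subset (f : V → V) :
    (parentGraph f).edgeSet ⊆ (fun v => s(v, f v)) '' {v | f v ≠ v} := by
  refine Sym2.ind fun x y h => ?_
  rw [SimpleGraph.mem_edgeSet] at h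
  obtain ⟨hne, rfl | rfl⟩ := parentGraph_adj.1 h
  · exact ⟨x, hne.symm, rfl⟩
  · exact ⟨y, hne, Sym2.eq_swap⟩

lemma reachable_parentGraph_iterate (f : V → V) (x : V) (m : ℕ) :
    (parentGraph f).Reachable x (f^[m] x) := by
  induction m with
  | zero => exact .rfl
  | succ m ih =>
    rw [iterate_succ_apply']
    by_cases h : f (f^[m] x) = f^[m] x
    · rwa [h]
    · exact ih.trans (adj_parentGraph_apply h).reachable

namespace IsRootedForest

lemma apply_ne_self (hf : IsRootedForest R f) (hx : x ∉ R) : f x ≠ x := fun h => by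
  obtain ⟨m, hm⟩ := hf.reaches x
  rw [iterate_fixed h] at hm
  exact hx hm

lemma rootDepth_le_add_one_of_adj (hf : IsRootedForest R f) (h : (parentGraph f).Adj x y) :
    rootDepth f R x ≤ rootDepth f R y + 1 := by
  obtain ⟨hne, rfl | rfl⟩ := parentGraph_adj.1 h
  · have hx : x ∉ R := fun hx => hne (hf.isFixedPt x hx).symm
    exact (hf.rootDepth_eq_rootDepth_apply_add_one hx).le
  · have hy : y ∉ R := fun hy => hne (hf.isFixedPt y hy)
    have := hf.rootDepth_eq_rootDepth_apply_add_one hy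
    omega

lemma rootDepth_le_length_add_rootDepth (hf : IsRootedForest R f) (p : (parentGraph f).Walk x y) :
    rootDepth f R x ≤ p.length + rootDepth f R y := by
  induction p with
  | nil => simp
  | cons h p ih =>
    have := hf.rootDepth_le_add_one_of_adj h
    rw [SimpleGraph.Walk.length_cons]
    omega

lemma of_lt (d : V → ℕ) (hfix : ∀ r ∈ R, IsFixedPt f r) (hlt : ∀ v ∉ R, d (f v) < d v) :
    IsRootedForest R f := by
  refine ⟨hfix, fun v => ?_⟩
  induction hn : d v using Nat.strong_induction_on generalizing v with
  | _ n ih =>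
    by_cases hv : v ∈ R
    · exact ⟨0, hv⟩
    · obtain ⟨m, hm⟩ := ih _ (hn ▸ hlt v hv) (f v) rfl
      exact ⟨m + 1, hm⟩

lemma connected_parentGraph (hf : IsRootedForest {b} f) : (parentGraph f).Connected := by
  have reach (v : V) : (parentGraph f).Reachable v b := by
    obtain ⟨m, hm⟩ := hf.reaches v
    exact Finset.mem_singleton.1 hm ▸ reachable_parentGraph_iterate f v m
  have : Nonempty V := ⟨b⟩
  exact ⟨fun x y => (reach x).trans (reach y).symm⟩

lemma dist_parentGraph (hf : IsRootedForest {b} f) (a : V) :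
    (parentGraph f).dist a b = rootDepth f {b} a := by
  have hconn := hf.connected_parentGraph
  refine le_antisymm ?_ ?_
  · induction hl : rootDepth f {b} a generalizing a with
    | zero =>
      have hab := hf.rootOf_mem a
      rw [rootOf, hl, iterate_zero_apply, mem_singleton] at hab
      simp [hab]
    | succ l ih =>
      have ha : a ∉ ({b} : Finset V) := fun ha => by simp [rootDepth_of_mem ha] at hl
      have hle := ih (f a) (by have := hf.rootDepth_eq_rootDepth_apply_add_one ha; omega)
      have hadj := SimpleGraph.dist_eq_one_iff_adj.2 (adj_parentGraph_apply (hf.apply_ne_self ha))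
      have := hconn.dist_triangle (u := a) (v := f a) (w := b)
      omega
  · obtain ⟨p, hp⟩ := hconn.exists_walk_length_eq_dist a b
    simpa [hp, rootDepth_of_mem] using hf.rootDepth_le_length_add_rootDepth p

lemma isTree_parentGraph [Finite V] (hf : IsRootedForest {b} f) : (parentGraph f).IsTree := by
  have hconn := hf.connected_parentGraph
  refine SimpleGraph.isTree_iff_connected_and_card.2
    ⟨hconn, le_antisymm ?_ hconn.card_vert_le_card_edgeSet_add_one⟩
  have hmoved : {v | f v ≠ v} ⊆ {b}ᶜ := fun v hv hvb => hv <| by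
    rw [hvb]
    exact hf.isFixedPt b (mem_singleton_self b)
  calc Nat.card (parentGraph f).edgeSet + 1
      ≤ ((fun v => s(v, f v)) '' {v | f v ≠ v}).ncard + 1 := by
        gcongr
        exact Set.ncard_le_ncard (edgeSet_parentGraph_subset f)
    _ ≤ ({b}ᶜ : Set V).ncard + 1 := by
        gcongr
        exact (Set.ncard_image_le (Set.toFinite _)).trans (Set.ncard_le_ncard hmoved)
    _ = Nat.card V := by rw [← Set.ncard_singleton b, add_comm, Set.ncard_add_ncard_compl]

lemma rootDepth_lt_card [Fintype V] (hf : IsRootedForest {b} f) (a : V) :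
    rootDepth f {b} a < Fintype.card V := by
  obtain ⟨p, hp, hlen⟩ := hf.connected_parentGraph.exists_path_of_dist a b
  exact hf.dist_parentGraph a ▸ hlen ▸ hp.length_lt

end IsRootedForest

lemma parentGraph_injOn (b : V) : Set.InjOn parentGraph {f : V → V | IsRootedForest {b} f} := by
  intro f hf g hg hfg
  have hdepth (v : V) : rootDepth f {b} v = rootDepth g {b} v := by
    rw [← hf.dist_parentGraph, hfg, hg.dist_parentGraph]
  funext v
  by_cases hv : v ∈ ({b} : Finset V)
  · exact (hf.isFixedPt v hv).trans (hg.isFixedPt v hv).symm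
  have hadj := adj_parentGraph_apply (hf.apply_ne_self hv)
  rw [hfg] at hadj
  obtain ⟨hne, h | h⟩ := parentGraph_adj.1 hadj
  · exact h.symm
  · have hfv : f v ∉ ({b} : Finset V) := fun hb => hne (h.symm.trans (hg.isFixedPt _ hb))
    have hup := hf.rootDepth_eq_rootDepth_apply_add_one hv
    have hdown := hg.rootDepth_eq_rootDepth_apply_add_one hfv
    rw [h, ← hdepth, ← hdepth] at hdown
    omega

lemma exists_adj_dist_lt {G : SimpleGraph V} (hG : G.Reachable a b) (h : a ≠ b) :
    ∃ c, G.Adj a c ∧ G.dist c b < G.dist a b := by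
  obtain ⟨p, hp⟩ := hG.exists_walk_length_eq_dist
  cases p with
  | nil => exact absurd rfl h
  | cons hadj p =>
    refine ⟨_, hadj, ?_⟩
    rw [← hp, SimpleGraph.Walk.length_cons]
    exact Nat.lt_succ_of_le (SimpleGraph.dist_le p)

lemma exists_isRootedForest_parentGraph_eq {G : SimpleGraph V} (hG : G.IsTree) (b : V) :
    ∃ f, IsRootedForest {b} f ∧ parentGraph f = G := by
  classical
  choose! f hadj hlt using fun v (hv : v ≠ b) => exists_adj_dist_lt (hG.connected v b) hv
  have hparent {v : V} (hv : v ≠ b) : update f b b v = f v := update_of_ne hv ..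
  have hf : IsRootedForest {b} (update f b b) := by
    refine .of_lt (G.dist · b) (by simp [IsFixedPt]) fun v hv => ?_
    rw [mem_singleton] at hv
    simpa [hparent hv] using hlt v hv
  have hsub : parentGraph (update f b b) ≤ G := by
    have parent_adj (v w : V) (hne : v ≠ w) (h : update f b b v = w) : G.Adj v w := by
      obtain rfl | hv := eq_or_ne v b
      · exact absurd ((update_self ..).symm.trans h) hne
      · exact h ▸ hparent hv ▸ hadj v hv
    intro x y h
    obtain ⟨hne, h | h⟩ := parentGraph_adj.1 h
    · exact parent_adj x y hne h
    · exact (parent_adj y x hne.symm h).symm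
  exact ⟨_, hf, hsub.antisymm
    ((SimpleGraph.isTree_iff_minimal_connected.1 hG).2 hf.connected_parentGraph hsub)⟩

end ParentGraph

section Trees
open Finset
variable {V M : Type*} [Fintype V] [DecidableEq V] [AddCommMonoid M]

open Classical in
lemma sum_isTree_eq_sum_rootedForests (b : V)
    (F : SimpleGraph V → M) :
    ∑ G : SimpleGraph V with G.IsTree, F G = ∑ f ∈ rootedForests {b}, F (parentGraph f) := by
  refine (sum_bij (fun f _ => parentGraph f) (fun f hf => ?_) (fun f hf g hg => ?_)
    (fun G hG => ?_) fun _ _ => rfl).symm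
  · rw [mem_rootedForests] at hf
    simpa using hf.isTree_parentGraph
  · exact parentGraph_injOn b (mem_rootedForests.1 hf) (mem_rootedForests.1 hg)
  · obtain ⟨f, hf, rfl⟩ := exists_isRootedForest_parentGraph_eq (mem_filter.1 hG).2 b
    exact ⟨f, mem_rootedForests.2 hf, rfl⟩

open Classical in
lemma sum_isTree_sum_dist (b : V) (w : ℕ → M) :
    ∑ G : SimpleGraph V with G.IsTree, ∑ a, w (G.dist a b) =
      ∑ l ∈ range (Fintype.card V), #(depthPairs {b} b l) • w l := by
  have hpairs : rootPairs {b} b = rootedForests {b} ×ˢ univ :=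
    filter_true_of_mem fun p hp =>
      mem_singleton.1 ((mem_rootedForests.1 (mem_product.1 hp).1).rootOf_mem p.2)
  calc ∑ G : SimpleGraph V with G.IsTree, ∑ a, w (G.dist a b)
      = ∑ f ∈ rootedForests {b}, ∑ a, w (rootDepth f {b} a) := by
        rw [sum_isTree_eq_sum_rootedForests b]
        refine sum_congr rfl fun f hf => sum_congr rfl fun a _ => ?_
        rw [(mem_rootedForests.1 hf).dist_parentGraph]
    _ = ∑ p ∈ rootPairs {b} b, w (rootDepth p.1 {b} p.2) := by rw [hpairs, sum_product]
    _ = ∑ l ∈ range (Fintype.card V), #(depthPairs {b} b l) • w l := by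
        have hmaps (p) (hp : p ∈ rootPairs {b} b) :
            rootDepth p.1 {b} p.2 ∈ range (Fintype.card V) :=
          mem_range.2 ((mem_rootPairs.1 hp).1.rootDepth_lt_card p.2)
        rw [← sum_fiberwise_of_maps_to' hmaps w]
        simp [depthPairs]

lemma sum_card_depthPairs_singleton {l : ℕ} (hl : l < Fintype.card V) :
    ∑ b : V, #(depthPairs {b} b l) =
      (Fintype.card V - 1).descFactorial l *
        ((l + 1) * Fintype.card V ^ (Fintype.card V - (l + 1))) := by
  refine Nat.eq_of_mul_eq_mul_left (Nat.zero_lt_of_lt hl) ?_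
  have hcard (b : V) := card_mul_card_depthPairs (mem_singleton_self b) l
  simp [mul_sum, hcard, add_comm 1 l]

open Classical in
theorem sum_isTree_sum_sum_dist (w : ℕ → M) :
    ∑ G : SimpleGraph V with G.IsTree, ∑ a, ∑ b, w (G.dist a b) =
      ∑ l ∈ range (Fintype.card V), ((Fintype.card V - 1).descFactorial l *
        ((l + 1) * Fintype.card V ^ (Fintype.card V - (l + 1)))) • w l := by
  calc ∑ G : SimpleGraph V with G.IsTree, ∑ a, ∑ b, w (G.dist a b)
      = ∑ b : V, ∑ G : SimpleGraph V with G.IsTree, ∑ a, w (G.dist a b) := by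
        rw [sum_comm (s := univ)]
        exact sum_congr rfl fun G _ => sum_comm
    _ = ∑ b : V, ∑ l ∈ range (Fintype.card V), #(depthPairs {b} b l) • w l :=
        sum_congr rfl fun b _ => sum_isTree_sum_dist b w
    _ = ∑ l ∈ range (Fintype.card V), (∑ b : V, #(depthPairs {b} b l)) • w l := by
        rw [sum_comm]
        simp_rw [sum_smul]
    _ = ∑ l ∈ range (Fintype.card V), ((Fintype.card V - 1).descFactorial l *
          ((l + 1) * Fintype.card V ^ (Fintype.card V - (l + 1)))) • w l :=
        sum_congr rfl fun l hl => by rw [sum_card_depthPairs_singleton (mem_range.1 hl)]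

end Trees

section Series
open PowerSeries

section CommRing
variable {R : Type*} [CommRing R]

lemma coeff_X_mul_derivative (f : R⟦X⟧) (n : ℕ) : coeff n (X * d⁄dX R f) = n * coeff n f := by
  cases n with
  | zero => simp
  | succ n => rw [coeff_succ_X_mul, coeff_derivative, mul_comm, Nat.cast_succ]

lemma coeff_subst_eq_sum_range {g : R⟦X⟧} (hg : constantCoeff g = 0) (f : R⟦X⟧) (n : ℕ) :
    coeff n (f.subst g) = ∑ d ∈ Finset.range (n + 1), coeff d f * coeff n (g ^ d) := by
  rw [coeff_subst' (.of_constantCoeff_zero' hg)]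
  refine finsum_eq_sum_of_support_subset _ fun d hd => ?_
  rw [Finset.coe_range, Set.mem_Iio, Nat.lt_succ_iff]
  by_contra! hlt
  refine hd ?_
  beta_reduce
  rw [X_pow_dvd_iff.1 (pow_dvd_pow_of_dvd (X_dvd_iff.2 hg) d) n hlt, smul_zero]

lemma X_mul_mk_one_pow_succ (k : ℕ) :
    (X * mk 1 : R⟦X⟧) ^ (k + 1) = X * mk fun l => (l.choose k : R) := by
  rw [mul_pow, mk_one_pow_eq_mk_choose_add, pow_succ', mul_assoc]
  congr 1
  ext l
  rw [coeff_X_pow_mul', coeff_mk, coeff_mk]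
  split_ifs with h
  · rw [Nat.add_sub_cancel' h]
  · rw [Nat.choose_eq_zero_of_lt (not_le.1 h), Nat.cast_zero]

end CommRing

section Exp
variable (A : Type*) [CommRing A] [Algebra ℚ A]

lemma derivative_evalNegHom_exp : d⁄dX A (evalNegHom (exp A)) = -evalNegHom (exp A) := by
  have hone := exp_mul_exp_neg_eq_one (A := A)
  have hderiv := congr_arg (d⁄dX A) hone
  rw [Derivation.leibniz, derivative_exp, Derivation.map_one_eq_zero, smul_eq_mul,
    smul_eq_mul] at hderiv
  linear_combination evalNegHom (exp A) * hderiv -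
    (d⁄dX A (evalNegHom (exp A)) + evalNegHom (exp A)) * hone

lemma coeff_one_X_mul_exp_neg : coeff 1 (X * evalNegHom (exp A)) = 1 := by
  simp [coeff_succ_X_mul 0, evalNegHom]

end Exp

/-- The exponential generating function `T` of rooted trees, encoded as the compositional inverse
of `X e^{-X}`, that is, as the solution of `T = X e^T`. -/
noncomputable def treeSeries : ℚ⟦X⟧ :=
  (X * evalNegHom (exp ℚ)).substInvOfIsUnit (by rw [coeff_one_X_mul_exp_neg]; exact isUnit_one)

lemma hasSubst_treeSeries : HasSubst treeSeries := HasSubst.substInvOfIsUnit ..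

lemma constantCoeff_treeSeries : constantCoeff treeSeries = 0 :=
  constantCoeff_substInvOfIsUnit ..

lemma subst_treeSeries_X_mul_exp_neg : (X * evalNegHom (exp ℚ)).subst treeSeries = X :=
  subst_substInvOfIsUnit_right _ (by simp) _

lemma X_mul_derivative_treeSeries_mul_one_sub :
    X * d⁄dX ℚ treeSeries * (1 - treeSeries) = treeSeries := by
  set φ : ℚ⟦X⟧ := X * evalNegHom (exp ℚ)
  have hsubst : φ.subst treeSeries = X := subst_treeSeries_X_mul_exp_neg
  have hφ : X * d⁄dX ℚ φ = φ - X * φ := by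
    simp only [φ, Derivation.leibniz, derivative_X, derivative_evalNegHom_exp, smul_eq_mul]
    ring
  have hchain : (d⁄dX ℚ φ).subst treeSeries * d⁄dX ℚ treeSeries = 1 := by
    rw [← derivative_subst hasSubst_treeSeries, hsubst, derivative_X]
  have hode : treeSeries * (d⁄dX ℚ φ).subst treeSeries = X - treeSeries * X := by
    have := congr_arg (subst treeSeries) hφ
    simpa only [subst_mul hasSubst_treeSeries, subst_sub hasSubst_treeSeries,
      subst_X hasSubst_treeSeries, hsubst] using this
  linear_combination treeSeries * hchain - d⁄dX ℚ treeSeries * hode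

lemma coeff_treeSeries_pow_self (r : ℕ) : coeff r (treeSeries ^ r) = 1 := by
  have hone : coeff 1 treeSeries = 1 := by
    rw [treeSeries, coeff_one_substInvOfIsUnit, Units.val_inv_eq_inv_val, IsUnit.unit_spec,
      coeff_one_X_mul_exp_neg, inv_one]
  obtain ⟨U, hU⟩ := X_dvd_iff.2 constantCoeff_treeSeries
  have hU₀ : constantCoeff U = 1 := by
    rwa [hU, ← zero_add 1, coeff_succ_X_mul, coeff_zero_eq_constantCoeff] at hone
  simp [hU, mul_pow, coeff_X_pow_mul', hU₀]

lemma coeff_treeSeries_pow_succ (r n : ℕ) :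
    (r + 1) * (n - r) * coeff n (treeSeries ^ r) = r * n * coeff n (treeSeries ^ (r + 1)) := by
  have hode : (r + 1) • (X * d⁄dX ℚ (treeSeries ^ r)) =
      (r + 1) • r • treeSeries ^ r + r • (X * d⁄dX ℚ (treeSeries ^ (r + 1))) := by
    cases r with
    | zero => simp
    | succ r =>
      simp only [derivative_pow, nsmul_eq_mul, Nat.add_sub_cancel]
      push_cast
      linear_combination (r + 2) * (r + 1) * treeSeries ^ r *
        X_mul_derivative_treeSeries_mul_one_sub
  have := congr_arg (coeff n) hode
  simp only [map_add, map_nsmul, coeff_X_mul_derivative] at this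
  push_cast [nsmul_eq_mul] at this
  linear_combination this

theorem coeff_treeSeries_pow (r d : ℕ) :
    (r + d) * d.factorial * coeff (r + d) (treeSeries ^ r) = r * (r + d : ℚ) ^ d := by
  induction d generalizing r with
  | zero => simp [coeff_treeSeries_pow_self]
  | succ d ih =>
    have hrec := coeff_treeSeries_pow_succ r (r + (d + 1))
    have hd := ih (r + 1)
    rw [add_right_comm, add_assoc] at hd
    push_cast [Nat.factorial_succ] at hrec hd ⊢
    have hr : (r + 1 : ℚ) ≠ 0 := by positivity
    refine mul_left_cancel₀ hr ?_
    linear_combination (r + (d + 1) : ℚ) * d.factorial * hrec + r * (r + (d + 1) : ℚ) * hd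

lemma subst_treeSeries_X_mul_mk_one :
    (X * mk 1 : ℚ⟦X⟧).subst treeSeries = X * d⁄dX ℚ treeSeries := by
  have hgeom : (X * mk 1 : ℚ⟦X⟧) * (1 - X) = X := by
    rw [mul_assoc, mk_one_mul_one_sub_eq_one, mul_one]
  have hone : (1 : ℚ⟦X⟧).subst treeSeries = 1 := by
    rw [← coe_substAlgHom hasSubst_treeSeries, map_one]
  have hsubst : (X * mk 1 : ℚ⟦X⟧).subst treeSeries * (1 - treeSeries) = treeSeries := by
    simpa only [subst_mul hasSubst_treeSeries (_ * _), subst_sub hasSubst_treeSeries, hone,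
      subst_X hasSubst_treeSeries] using congr_arg (subst treeSeries) hgeom
  have hne : 1 - treeSeries ≠ 0 := fun h => by
    simpa [constantCoeff_treeSeries] using congr_arg constantCoeff h
  exact mul_right_cancel₀ hne (hsubst.trans X_mul_derivative_treeSeries_mul_one_sub.symm)

lemma X_mul_derivative_treeSeries : X * d⁄dX ℚ treeSeries = Zq := by
  ext n
  cases n with
  | zero => simp [Zq]
  | succ n =>
    have h := coeff_treeSeries_pow 1 n
    rw [pow_one, add_comm 1 n] at h
    rw [coeff_succ_X_mul, coeff_derivative, Zq, coeff_mk, if_neg n.succ_ne_zero,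
      eq_div_iff (by positivity)]
    push_cast [Nat.factorial_succ] at h ⊢
    linear_combination (n + 1 : ℚ) * h

lemma pCayley_eq_sum (n k : ℕ) :
    pCayley n k = ∑ l ∈ Finset.range n,
      (n - 1).descFactorial l * ((l + 1) * n ^ (n - (l + 1))) * l.choose k := by
  have hsum := sum_isTree_sum_sum_dist (V := Fin n) (Nat.choose · k)
  simp only [Fintype.card_fin, smul_eq_mul] at hsum
  rw [← hsum, pCayley]
  congr! 2
  exact (SimpleGraph.isTree_iff _).symm

lemma pCayley_series_eq_subst_treeSeries (k : ℕ) :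
    (mk fun n => (pCayley n k : ℚ) / n.factorial) =
      (X * mk fun l => (l.choose k : ℚ)).subst treeSeries := by
  ext n
  rw [coeff_mk, coeff_subst_eq_sum_range constantCoeff_treeSeries, Finset.sum_range_succ',
    coeff_zero_X_mul, zero_mul, add_zero, pCayley_eq_sum, Nat.cast_sum, Finset.sum_div]
  refine Finset.sum_congr rfl fun l hl => ?_
  obtain ⟨d, rfl⟩ := Nat.exists_eq_add_of_le (Nat.succ_le_of_lt (Finset.mem_range.1 hl))
  have hT := coeff_treeSeries_pow (l + 1) d
  have hfac : (l + 1 + d).factorial = (l + 1 + d) * (d.factorial * (l + d).descFactorial l) := by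
    rw [add_right_comm, Nat.factorial_succ, ← Nat.factorial_mul_descFactorial (l.le_add_right d),
      Nat.add_sub_cancel_left]
  rw [coeff_succ_X_mul, coeff_mk, div_eq_iff (by positivity), Nat.add_sub_cancel_left,
    show l + 1 + d - 1 = l + d by omega, hfac]
  push_cast at hT ⊢
  linear_combination -((l + d).descFactorial l * l.choose k : ℚ) * hT

end Series

/-- For every `k ≥ 0`, `Σ_{n≥1} (p_{n,k}/n!) qⁿ = Z^{k+1}`. -/
theorem pCayley_series_eq_Z_pow (k : ℕ) :
    (PowerSeries.mk fun n => (pCayley n k : ℚ) / n.factorial) = Zq ^ (k + 1) := by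
  rw [pCayley_series_eq_subst_treeSeries, ← X_mul_mk_one_pow_succ,
    PowerSeries.subst_pow hasSubst_treeSeries, subst_treeSeries_X_mul_mk_one,
    X_mul_derivative_treeSeries]
end

section
/- For every n ≥ 1, the total height of Cayley trees on n vertices equals A_n: Σ_T Σ_{(a,b)} l_T(a,b) = A_n, where T ranges over all Cayley trees on n vertices and (a,b) over all ordered pairs of vertices of T. -/
/-- `Aₙ = Σ_{p+s=n, p,s ≥ 1} (n!/(p!·s!)) pᵖ sˢ`, as a rational number. -/
noncomputable def Aseq (n : ℕ) : ℚ :=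
  ∑ p ∈ Finset.Ioo 0 n,
    (n.factorial : ℚ) / (p.factorial * (n - p).factorial) * p ^ p * (n - p) ^ (n - p)

open Classical in
/-- The total height of Cayley trees on `n` vertices: `Σ_T Σ_{(a,b)} l_T(a,b)`, summed
over all Cayley trees `T` on `n` vertices (connected acyclic simple graphs on `{1,…,n}`)
and all ordered pairs `(a,b)` of vertices, where `l_T(a,b)` is the graph distance. -/
noncomputable def totalHeight (n : ℕ) : ℕ :=
  ∑ G ∈ Finset.univ.filter (fun G : SimpleGraph (Fin n) => G.Connected ∧ G.IsAcyclic),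
    ∑ a : Fin n, ∑ b : Fin n, G.dist a b

/-!
Cutting a tree at an oriented edge splits its vertex set into `A` and its complement, with a tree on
each side, and the cut can be undone whenever the endpoints `u ∈ A` and `v ∉ A` are given. Since
`l_T(a,b)` counts the oriented edges of `T` whose cut separates `a` from `b` in this order, each cut
with sides of sizes `p` and `s` contributes `p s` to the total height. There are `C(n,p)` sides `A`,
`p s` arcs `uv` and `t_p t_s` pairs of trees, where `t_m` is the number of trees on `m` vertices,
so the total height is `∑ C(n,p) (p² t_p) (s² t_s)`, and Cayley's formula turns `m² t_m` into `m^m`.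

The same count with weight `1` instead of `p s` gives `2 (n-1) t_n = ∑ C(n,p) (p t_p) (s t_s)`,
since a tree has `n - 1` edges. Cayley's formula follows from this recurrence by an identity of Abel
type, which is proved by differentiating a polynomial in an auxiliary variable.
-/

namespace CayleyTree

open Finset SimpleGraph

theorem sum_antidiagonal_eq_sum_Ioo {M : Type*} [AddCommMonoid M] {n : ℕ} {f : ℕ → ℕ → M}
    (h₀ : f 0 n = 0) (hn : f n 0 = 0) :
    ∑ ij ∈ antidiagonal n, f ij.1 ij.2 = ∑ k ∈ Ioo 0 n, f k (n - k) := by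
  rw [Nat.sum_antidiagonal_eq_sum_range_succ f]
  refine (sum_subset (fun k hk => ?_) fun k hk hk' => ?_).symm
  · simp only [mem_Ioo, mem_range] at *; omega
  · obtain rfl | rfl : k = 0 ∨ k = n := by simp only [mem_Ioo, mem_range] at *; omega
    · simpa using h₀
    · simpa using hn

section Abel

open Polynomial

/-- The polynomials `∑_{i+j=n} C(n+1,i+1) (i+1)^i (X-(i+1))^j`. They form an Appell sequence up to
normalisation, see `derivative_abelPoly`, which is how their closed form `abelPoly_eq` is found. -/
noncomputable def abelPoly (n : ℕ) : ℤ[X] :=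
  ∑ ij ∈ antidiagonal n, ((n + 1).choose (ij.1 + 1) : ℤ[X]) * ((ij.1 : ℤ[X]) + 1) ^ ij.1 *
    (X - ((ij.1 : ℤ[X]) + 1)) ^ ij.2

theorem derivative_abelPoly (n : ℕ) :
    derivative (abelPoly (n + 1)) = ((n : ℤ[X]) + 2) * abelPoly n := by
  have hchoose (ij : ℕ × ℕ) (hij : ij ∈ antidiagonal n) :
      ((n + 1).choose (ij.1 + 1) : ℤ[X]) * (n + 2) = (n + 2).choose (ij.1 + 1) * (ij.2 + 1) := by
    have hsub : n + 1 + 1 - (ij.1 + 1) = ij.2 + 1 := by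
      rw [HasAntidiagonal.mem_antidiagonal] at hij
      omega
    exact_mod_cast hsub ▸ Nat.choose_mul_succ_eq (n + 1) (ij.1 + 1)
  have hterm (ij : ℕ × ℕ) : derivative (((n + 2).choose (ij.1 + 1) : ℤ[X]) *
      ((ij.1 : ℤ[X]) + 1) ^ ij.1 * (X - ((ij.1 : ℤ[X]) + 1)) ^ (ij.2 + 1)) =
      ((n + 2).choose (ij.1 + 1) : ℤ[X]) * ((ij.1 : ℤ[X]) + 1) ^ ij.1 *
        (((ij.2 : ℤ[X]) + 1) * (X - ((ij.1 : ℤ[X]) + 1)) ^ ij.2) := by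
    simp [derivative_pow]
  have hlast : derivative (((n + 2).choose (n + 1 + 1) : ℤ[X]) *
      (((n + 1 : ℕ) : ℤ[X]) + 1) ^ (n + 1) * (X - (((n + 1 : ℕ) : ℤ[X]) + 1)) ^ 0) = 0 := by
    simp [derivative_pow]
  rw [abelPoly.eq_def n, abelPoly, derivative_sum, Nat.sum_antidiagonal_succ', hlast, zero_add,
    mul_sum]
  refine sum_congr rfl fun ij hij => ?_
  refine (hterm ij).trans ?_
  linear_combination
    -((ij.1 : ℤ[X]) + 1) ^ ij.1 * (X - ((ij.1 : ℤ[X]) + 1)) ^ ij.2 * hchoose ij hij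

/-- Up to sign, the value at `0` is the finite difference of order `n + 2` of `x ^ (n + 1)`. -/
theorem eval_zero_abelPoly (n : ℕ) : (abelPoly (n + 1)).eval 0 = 0 := by
  have hdiff := fwdDiff_iter_eq_sum_shift (1 : ℤ) (fun x => x ^ (n + 1)) (n + 2) 0
  rw [fwdDiff_iter_pow_eq_zero_of_lt (Nat.lt_succ_self _), Pi.zero_apply, sum_range_succ'] at hdiff
  simp only [Int.reduceNeg, Nat.reduceSubDiff, Int.nsmul_eq_mul, Nat.cast_add, Nat.cast_one,
    mul_one, zero_add, Int.zsmul_eq_mul, zero_nsmul, add_zero, ne_eq, Nat.add_eq_zero_iff,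
    one_ne_zero, and_false, not_false_eq_true, zero_pow, mul_zero] at hdiff
  rw [abelPoly, eval_finsetSum, Nat.sum_antidiagonal_eq_sum_range_succ_mk]
  refine (sum_congr rfl fun k hk => ?_).trans hdiff.symm
  have hpow : (k + 1 : ℤ) ^ (n + 1) = (k + 1) ^ k * (k + 1) ^ (n + 1 - k) := by
    rw [← pow_add, Nat.add_sub_of_le (Nat.lt_succ_iff.1 (mem_range.1 hk))]
  simp only [eval_mul, eval_pow, eval_sub, eval_add, eval_X, eval_natCast, eval_one, zero_sub]
  rw [neg_pow, hpow]
  ring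

theorem abelPoly_eq (n : ℕ) : abelPoly n = ((n : ℤ[X]) + 1) * X ^ n := by
  induction n with
  | zero => simp [abelPoly]
  | succ n ih =>
    have hderiv : derivative (abelPoly (n + 1) - ((n : ℤ[X]) + 2) * X ^ (n + 1)) = 0 := by
      simp [derivative_abelPoly, ih]
    have hconst := eq_C_of_derivative_eq_zero hderiv
    rw [coeff_zero_eq_eval_zero, eval_sub, eval_zero_abelPoly] at hconst
    simp only [eval_mul, eval_pow, eval_X, ne_eq, Nat.succ_ne_zero, not_false_eq_true, zero_pow,
      mul_zero, sub_zero, map_zero] at hconst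
    rw [sub_eq_zero.1 hconst]
    push_cast
    ring

theorem sum_antidiagonal_choose_mul_pow_mul_pow_self (n : ℕ) :
    ∑ ij ∈ antidiagonal n, (n + 1).choose (ij.1 + 1) * (ij.1 + 1) ^ ij.1 * ij.2 ^ ij.2
      = (n + 1) * (n + 1) ^ n := by
  have heval := congrArg (eval ((n : ℤ) + 1)) (abelPoly_eq n)
  simp only [abelPoly, eval_finsetSum, eval_mul, eval_pow, eval_sub, eval_add, eval_X,
    eval_natCast, eval_one] at heval
  zify
  rw [← heval]
  refine sum_congr rfl fun ij hij => ?_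
  rw [← HasAntidiagonal.mem_antidiagonal.1 hij]
  push_cast
  ring

theorem sum_antidiagonal_choose_mul_pow_mul_pow_succ (n : ℕ) :
    ∑ ij ∈ antidiagonal n,
      (n + 2).choose (ij.1 + 1) * (ij.1 + 1) ^ ij.1 * (ij.2 + 1) ^ (ij.2 + 1)
      = (n + 1) * (n + 2) ^ (n + 1) := by
  have hself := sum_antidiagonal_choose_mul_pow_mul_pow_self (n + 1)
  rw [Nat.sum_antidiagonal_succ'] at hself
  simp only [Nat.choose_self, one_mul, pow_zero, mul_one] at hself
  linear_combination hself

/-- Writing `n + 2` as `(i + 1) + (j + 1)`, the sum times `n + 2` is the sum in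
`sum_antidiagonal_choose_mul_pow_mul_pow_succ` plus its mirror image. -/
theorem sum_antidiagonal_choose_mul_pow_mul_pow (n : ℕ) :
    ∑ ij ∈ antidiagonal n, (n + 2).choose (ij.1 + 1) * (ij.1 + 1) ^ ij.1 * (ij.2 + 1) ^ ij.2
      = 2 * (n + 1) * (n + 2) ^ n := by
  have hswap : ∑ ij ∈ antidiagonal n,
      (n + 2).choose (ij.1 + 1) * (ij.1 + 1) ^ (ij.1 + 1) * (ij.2 + 1) ^ ij.2
      = (n + 1) * (n + 2) ^ (n + 1) := by
    rw [← sum_antidiagonal_choose_mul_pow_mul_pow_succ, ← Nat.sum_antidiagonal_swap]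
    refine sum_congr rfl fun ij hij => ?_
    have hsum : n + 2 = ij.2 + 1 + (ij.1 + 1) := by
      rw [← HasAntidiagonal.mem_antidiagonal.1 hij]
      ring
    rw [Prod.fst_swap, Prod.snd_swap, Nat.choose_symm_of_eq_add hsum]
    ring
  refine Nat.eq_of_mul_eq_mul_left (show 0 < n + 2 by omega) ?_
  calc (n + 2) * ∑ ij ∈ antidiagonal n,
        (n + 2).choose (ij.1 + 1) * (ij.1 + 1) ^ ij.1 * (ij.2 + 1) ^ ij.2
      = ∑ ij ∈ antidiagonal n,
          ((n + 2).choose (ij.1 + 1) * (ij.1 + 1) ^ (ij.1 + 1) * (ij.2 + 1) ^ ij.2 +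
            (n + 2).choose (ij.1 + 1) * (ij.1 + 1) ^ ij.1 * (ij.2 + 1) ^ (ij.2 + 1)) := by
        rw [mul_sum]
        refine sum_congr rfl fun ij hij => ?_
        rw [← HasAntidiagonal.mem_antidiagonal.1 hij]
        ring
    _ = (n + 2) * (2 * (n + 1) * (n + 2) ^ n) := by
        rw [sum_add_distrib, hswap, sum_antidiagonal_choose_mul_pow_mul_pow_succ]
        ring

end Abel

section CutArc

variable {V : Type*} {G : SimpleGraph V} {A B : Set V} {u v a b : V}

/-- `IsCutArc G A u v` says that, among the edges of `G` between `A` and its complement, there is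
exactly one, and it joins `u ∈ A` to `v ∉ A`. In a tree this encodes an edge, oriented from `u`
to `v`, together with the component `A` of `u` left by its removal. -/
structure IsCutArc (G : SimpleGraph V) (A : Set V) (u v : V) : Prop where
  fst_mem : u ∈ A
  snd_notMem : v ∉ A
  adj_iff : ∀ x ∈ A, ∀ y ∉ A, G.Adj x y ↔ x = u ∧ y = v

namespace IsCutArc

theorem adj (h : IsCutArc G A u v) : G.Adj u v :=
  (h.adj_iff u h.fst_mem v h.snd_notMem).2 ⟨rfl, rfl⟩

theorem compl (h : IsCutArc G A u v) : IsCutArc G Aᶜ v u where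
  fst_mem := h.snd_notMem
  snd_notMem := not_not_intro h.fst_mem
  adj_iff x hx y hy := by rw [G.adj_comm, h.adj_iff y (not_not.1 hy) x hx, and_comm]

theorem exists_dart_mem_darts (h : IsCutArc G A u v) (p : G.Walk a b) (ha : a ∈ A) (hb : b ∉ A) :
    ∃ d ∈ p.darts, d.toProd = (u, v) := by
  obtain ⟨d, hd, hfst, hsnd⟩ := p.exists_boundary_dart A ha hb
  exact ⟨d, hd, Prod.ext_iff.2 ((h.adj_iff _ hfst _ hsnd).1 d.adj)⟩

theorem mem_edges (h : IsCutArc G A u v) (p : G.Walk a b) (ha : a ∈ A) (hb : b ∉ A) :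
    s(u, v) ∈ p.edges := by
  obtain ⟨d, hd, hduv⟩ := h.exists_dart_mem_darts p ha hb
  exact List.mem_map.2 ⟨d, hd, by simp [Dart.edge, hduv]⟩

/-- A trail with both ends in `A` that left `A` would have to use the edge `uv` twice. -/
theorem mem_of_mem_support (h : IsCutArc G A u v) {p : G.Walk a b} (hp : p.IsTrail)
    (ha : a ∈ A) (hb : b ∈ A) {x : V} (hx : x ∈ p.support) : x ∈ A := by
  classical
  by_contra hxA
  refine hp.disjoint_edges_takeUntil_dropUntil hx (h.mem_edges (p.takeUntil x hx) ha hxA) ?_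
  rw [Sym2.eq_swap]
  exact h.compl.mem_edges (p.dropUntil x hx) hxA (not_not_intro hb)

theorem dist_lt (h : IsCutArc G A u v) (hG : G.Connected) (ha : a ∈ A) :
    G.dist a u < G.dist a v := by
  classical
  obtain ⟨p, hp⟩ := hG.exists_walk_length_eq_dist a v
  have hu : u ∈ p.support := p.fst_mem_support_of_mem_edges (h.mem_edges p ha h.snd_notMem)
  calc G.dist a u ≤ (p.takeUntil u hu).length := dist_le _
    _ < p.length := p.length_takeUntil_lt_length hu h.adj.ne
    _ = G.dist a v := hp

theorem mem_iff_dist_lt (h : IsCutArc G A u v) (hG : G.Connected) :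
    a ∈ A ↔ G.dist a u < G.dist a v :=
  ⟨h.dist_lt hG, fun hlt => by_contra fun ha => hlt.asymm (h.compl.dist_lt hG ha)⟩

theorem unique (h : IsCutArc G A u v) (h' : IsCutArc G B u v) (hG : G.Connected) : A = B := by
  ext a
  rw [h.mem_iff_dist_lt hG, h'.mem_iff_dist_lt hG]

/-- If `a ∉ A` or `b ∈ A`, the trail would use the edge `uv` in the direction `vu` as well, or not
leave one side of it at all. -/
theorem mem_and_notMem_of_mem_darts (h : IsCutArc G A u v) {p : G.Walk a b} (hp : p.IsTrail)
    {d : G.Dart} (hd : d ∈ p.darts) (hduv : d.toProd = (u, v)) : a ∈ A ∧ b ∉ A := by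
  have hu : u ∈ p.support := by simpa [hduv] using p.dart_fst_mem_support_of_mem_darts hd
  have hv : v ∈ p.support := by simpa [hduv] using p.dart_snd_mem_support_of_mem_darts hd
  by_cases ha : a ∈ A
  · exact ⟨ha, fun hb => h.snd_notMem (h.mem_of_mem_support hp ha hb hv)⟩
  by_cases hb : b ∈ A
  · obtain ⟨d', hd', hdvu⟩ := h.compl.exists_dart_mem_darts p ha (not_not_intro hb)
    have hedge : d'.edge = d.edge := by simp [Dart.edge, hduv, hdvu, Sym2.eq_swap]
    obtain rfl := List.inj_on_of_nodup_map hp.edges_nodup hd' hd hedge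
    exact absurd (Prod.mk.inj (hduv.symm.trans hdvu)).1 h.adj.ne
  · exact absurd h.fst_mem (h.compl.mem_of_mem_support hp ha hb hu)

theorem connected_induce (h : IsCutArc G A u v) (hG : G.Connected) : (G.induce A).Connected := by
  classical
  have : Nonempty A := ⟨⟨u, h.fst_mem⟩⟩
  refine ⟨fun x y => ?_⟩
  obtain ⟨p, hp⟩ := hG.exists_isPath x.1 y.1
  exact ⟨p.induce A fun z => h.mem_of_mem_support hp.isTrail x.2 y.2⟩

theorem isTree_induce (h : IsCutArc G A u v) (hG : G.IsTree) : (G.induce A).IsTree :=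
  ⟨h.connected_induce hG.connected, hG.isAcyclic.induce A⟩

theorem not_isCycle (h : IsCutArc G A u v) (hA : (G.induce A).IsAcyclic) {c : G.Walk a a}
    (ha : a ∈ A) : ¬ c.IsCycle := by
  intro hc
  have hsupp : ∀ x ∈ c.support, x ∈ A := fun x => h.mem_of_mem_support hc.isTrail ha ha
  have hmap : ((c.induce A hsupp).map (Embedding.induce A).toHom).IsCycle := by
    rwa [Walk.map_induce]
  exact hA _ hmap.of_map

theorem connected_of_induce (h : IsCutArc G A u v) (hA : (G.induce A).Connected)
    (hAc : (G.induce Aᶜ).Connected) : G.Connected := by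
  have hu : ∀ x, G.Reachable u x := fun x => by
    by_cases hx : x ∈ A
    · exact (hA ⟨u, h.fst_mem⟩ ⟨x, hx⟩).map (Embedding.induce A).toHom
    · exact h.adj.reachable.trans
        ((hAc ⟨v, h.snd_notMem⟩ ⟨x, hx⟩).map (Embedding.induce Aᶜ).toHom)
  have : Nonempty V := ⟨u⟩
  exact ⟨fun x y => (hu x).symm.trans (hu y)⟩

theorem isTree_of_induce (h : IsCutArc G A u v) (hA : (G.induce A).IsTree)
    (hAc : (G.induce Aᶜ).IsTree) : G.IsTree where
  connected := h.connected_of_induce hA.connected hAc.connected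
  isAcyclic a _ := by
    by_cases ha : a ∈ A
    · exact h.not_isCycle hA.isAcyclic ha
    · exact h.compl.not_isCycle hAc.isAcyclic ha

end IsCutArc

theorem exists_isCutArc (hG : G.IsAcyclic) (huv : G.Adj u v) : ∃ A, IsCutArc G A u v := by
  have hbridge : ¬ (G.deleteEdges {s(u, v)}).Reachable u v :=
    isBridge_iff.1 (isAcyclic_iff_forall_adj_isBridge.1 hG huv)
  refine ⟨{x | (G.deleteEdges {s(u, v)}).Reachable u x}, Reachable.refl _, hbridge,
    fun x hx y hy => ⟨fun hxy => ?_, fun ⟨hxu, hyv⟩ => hxu ▸ hyv ▸ huv⟩⟩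
  by_cases he : s(x, y) = s(u, v)
  · exact (Sym2.eq_iff.1 he).resolve_right fun hswap => hbridge (hswap.1 ▸ hx)
  · exact absurd (Reachable.trans hx (deleteEdges_adj.2 ⟨hxy, he⟩).reachable) hy

/-- The graph on `V` obtained from disjoint graphs on `A` and on its complement by adding the
edge `uv`. -/
def glue (A : Set V) (u v : V) (T₁ : SimpleGraph A) (T₂ : SimpleGraph (Aᶜ : Set V)) :
    SimpleGraph V :=
  T₁.spanningCoe ⊔ T₂.spanningCoe ⊔ edge u v

theorem isCutArc_glue (hu : u ∈ A) (hv : v ∉ A) (T₁ : SimpleGraph A)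
    (T₂ : SimpleGraph (Aᶜ : Set V)) : IsCutArc (glue A u v T₁ T₂) A u v where
  fst_mem := hu
  snd_notMem := hv
  adj_iff x hx y hy := by
    have hxv : x ≠ v := ne_of_mem_of_not_mem hx hv
    have hxy : x ≠ y := ne_of_mem_of_not_mem hx hy
    simp [glue, edge_adj, hx, hy, hxv, hxy]

theorem induce_glue (hv : v ∉ A) (T₁ : SimpleGraph A) (T₂ : SimpleGraph (Aᶜ : Set V)) :
    (glue A u v T₁ T₂).induce A = T₁ := by
  ext ⟨x, hx⟩ ⟨y, hy⟩
  have hxv : x ≠ v := ne_of_mem_of_not_mem hx hv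
  have hyv : y ≠ v := ne_of_mem_of_not_mem hy hv
  simp [glue, edge_adj, hx, hy, hxv, hyv]

theorem induce_compl_glue (hu : u ∈ A) (T₁ : SimpleGraph A) (T₂ : SimpleGraph (Aᶜ : Set V)) :
    (glue A u v T₁ T₂).induce Aᶜ = T₂ := by
  ext ⟨x, hx⟩ ⟨y, hy⟩
  have hxu : x ≠ u := (ne_of_mem_of_not_mem hu hx).symm
  have hyu : y ≠ u := (ne_of_mem_of_not_mem hu hy).symm
  rw [Set.mem_compl_iff] at hx hy
  simp [glue, edge_adj, hx, hy, hxu, hyu]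

theorem IsCutArc.glue_induce (h : IsCutArc G A u v) :
    glue A u v (G.induce A) (G.induce Aᶜ) = G := by
  ext x y
  by_cases hx : x ∈ A <;> by_cases hy : y ∈ A
  · have hyv : y ≠ v := ne_of_mem_of_not_mem hy h.snd_notMem
    have hxv : x ≠ v := ne_of_mem_of_not_mem hx h.snd_notMem
    simp [glue, edge_adj, hx, hy, hxv, hyv]
  · have hxy : x ≠ y := ne_of_mem_of_not_mem hx hy
    have hxv : x ≠ v := ne_of_mem_of_not_mem hx h.snd_notMem
    simp [glue, edge_adj, hx, hy, hxy, hxv, h.adj_iff x hx y hy]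
  · have hyx : y ≠ x := ne_of_mem_of_not_mem hy hx
    have hyv : y ≠ v := ne_of_mem_of_not_mem hy h.snd_notMem
    simp [glue, edge_adj, hx, hy, hyx.symm, hyv, G.adj_comm x y, h.adj_iff y hy x hx, and_comm]
  · have hxu : x ≠ u := (ne_of_mem_of_not_mem h.fst_mem hx).symm
    have hyu : y ≠ u := (ne_of_mem_of_not_mem h.fst_mem hy).symm
    simp [glue, edge_adj, hx, hy, hxu, hyu]

/-- Cutting a tree at the edge `uv` is a bijection onto pairs of trees on the two sides. -/
def cutEquiv (hu : u ∈ A) (hv : v ∉ A) :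
    {G : SimpleGraph V // G.IsTree ∧ IsCutArc G A u v} ≃
      {T : SimpleGraph A // T.IsTree} × {T : SimpleGraph (Aᶜ : Set V) // T.IsTree} where
  toFun G := (⟨_, G.2.2.isTree_induce G.2.1⟩, ⟨_, G.2.2.compl.isTree_induce G.2.1⟩)
  invFun T := ⟨glue A u v T.1.1 T.2.1,
    (isCutArc_glue hu hv _ _).isTree_of_induce
      (by rw [induce_glue hv]; exact T.1.2) (by rw [induce_compl_glue hu]; exact T.2.2),
    isCutArc_glue hu hv _ _⟩
  left_inv G := Subtype.ext G.2.2.glue_induce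
  right_inv T := Prod.ext (Subtype.ext (induce_glue hv _ _))
    (Subtype.ext (induce_compl_glue hu _ _))

end CutArc

section Cuts

variable {V : Type*} [Fintype V] {G : SimpleGraph V}

open Classical in
/-- All triples `(A, u, v)` with `IsCutArc G A u v`; in a tree these are its oriented edges, each
with the side on which it starts. -/
noncomputable def cuts (G : SimpleGraph V) : Finset (Finset V × V × V) :=
  univ.filter fun q => IsCutArc G q.1 q.2.1 q.2.2

theorem mem_cuts {q : Finset V × V × V} : q ∈ cuts G ↔ IsCutArc G q.1 q.2.1 q.2.2 := by
  simp [cuts]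

theorem exists_mem_cuts (hG : G.IsAcyclic) (d : G.Dart) :
    ∃ A : Finset V, (A, d.toProd) ∈ cuts G := by
  classical
  obtain ⟨A, hA⟩ := exists_isCutArc hG d.adj
  exact ⟨A.toFinset, mem_cuts.2 (by simpa using hA)⟩

theorem injOn_snd_cuts (hG : G.Connected) :
    Set.InjOn Prod.snd (cuts G : Set (Finset V × V × V)) := by
  rintro ⟨A, u, v⟩ hA ⟨B, u', v'⟩ hB huv
  cases huv
  have hA' : IsCutArc G A u v := mem_cuts.1 hA
  have hB' : IsCutArc G B u v := mem_cuts.1 hB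
  exact congrArg (·, u, v) (coe_injective (hA'.unique hB' hG))

theorem card_cuts (hG : G.IsTree) : #(cuts G) = 2 * (Fintype.card V - 1) := by
  classical
  rw [← hG.card_edgeFinset, Nat.add_sub_cancel, ← G.dart_card_eq_twice_card_edges, ← card_univ]
  refine card_bij (fun q hq => ⟨q.2, (mem_cuts.1 hq).adj⟩) (fun _ _ => mem_univ _)
    (fun q hq q' hq' he => injOn_snd_cuts hG.connected hq hq' (congrArg Dart.toProd he))
    fun d _ => ?_
  obtain ⟨A, hA⟩ := exists_mem_cuts hG.isAcyclic d
  exact ⟨_, hA, rfl⟩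

/-- The cuts separating `a` from `b` are exactly those at the darts of the path from `a` to `b`. -/
theorem card_filter_cuts_eq_dist [DecidableEq V] (hG : G.IsTree) (a b : V) :
    #{q ∈ cuts G | a ∈ q.1 ∧ b ∉ q.1} = G.dist a b := by
  classical
  obtain ⟨p, hp, hlen⟩ := hG.connected.exists_path_of_dist a b
  rw [← hlen, ← p.length_darts,
    ← List.toFinset_card_of_nodup (Walk.darts_nodup_of_support_nodup hp.support_nodup)]
  refine card_bij (fun q hq => ⟨q.2, (mem_cuts.1 (mem_filter.1 hq).1).adj⟩) (fun q hq => ?_)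
    (fun q hq q' hq' he => injOn_snd_cuts hG.connected (mem_filter.1 hq).1 (mem_filter.1 hq').1
      (congrArg Dart.toProd he)) fun d hd => ?_
  · obtain ⟨hcut, ha, hb⟩ := mem_filter.1 hq
    obtain ⟨d, hd, hdq⟩ := (mem_cuts.1 hcut).exists_dart_mem_darts p ha hb
    rw [List.mem_toFinset]
    convert hd
    exact hdq.symm
  · obtain ⟨A, hA⟩ := exists_mem_cuts hG.isAcyclic d
    have hsep := (mem_cuts.1 hA).mem_and_notMem_of_mem_darts hp.isTrail (List.mem_toFinset.1 hd) rfl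
    exact ⟨_, mem_filter.2 ⟨hA, hsep⟩, rfl⟩

theorem sum_sum_dist_eq_sum_cuts [DecidableEq V] (hG : G.IsTree) :
    ∑ a, ∑ b, G.dist a b = ∑ q ∈ cuts G, #q.1 * #q.1ᶜ := by
  simp_rw [← card_filter_cuts_eq_dist hG, card_filter]
  simp_rw [sum_comm (s := univ) (t := cuts G)]
  refine sum_congr rfl fun q _ => ?_
  rw [← sum_product', ← card_filter, ← card_product]
  congr 1
  ext
  simp

end Cuts

section Count

/-- The number of Cayley trees on `n` vertices. -/
noncomputable def numTrees (n : ℕ) : ℕ := Nat.card {G : SimpleGraph (Fin n) // G.IsTree}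

theorem natCard_isTree (V : Type*) [Finite V] :
    Nat.card {G : SimpleGraph V // G.IsTree} = numTrees (Nat.card V) :=
  let e := Finite.equivFin V
  Nat.card_congr (e.simpleGraph.subtypeEquiv fun G => (Iso.comap e.symm G).isTree_iff.symm)

theorem numTrees_one : numTrees 1 = 1 :=
  Nat.card_eq_one_iff_unique.2
    ⟨⟨fun _ _ => Subtype.ext (Subsingleton.elim _ _)⟩, ⟨⟨⊥, IsTree.of_subsingleton⟩⟩⟩

variable {V : Type*} [Fintype V] [DecidableEq V]

open Classical in
theorem card_filter_isTree_and_isCutArc {A : Finset V} {u v : V} :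
    #{G : SimpleGraph V | G.IsTree ∧ IsCutArc G A u v}
      = if (u, v) ∈ A ×ˢ Aᶜ then numTrees #A * numTrees #Aᶜ else 0 := by
  split_ifs with h
  · obtain ⟨hu, hv⟩ : u ∈ A ∧ v ∉ A := by simpa using h
    have hcard := Nat.card_congr (cutEquiv (A := (A : Set V)) hu hv)
    rw [Nat.card_prod, natCard_isTree, natCard_isTree, ← coe_compl, Nat.card_coe_set_eq,
      Nat.card_coe_set_eq, Set.ncard_coe_finset, Set.ncard_coe_finset, Nat.card_eq_fintype_card,
      Fintype.card_subtype] at hcard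
    exact hcard
  · refine card_eq_zero.2 (filter_eq_empty_iff.2 fun G _ hG => h ?_)
    simpa using ⟨hG.2.fst_mem, hG.2.snd_notMem⟩

open Classical in
/-- A tree with a cut whose first component is `A` amounts to an arc from `A` to its complement and
a tree on each side, and there are `(card V).choose p` choices of an `A` of size `p`. -/
theorem sum_isTree_sum_cuts (w : ℕ → ℕ → ℕ) :
    ∑ G : SimpleGraph V with G.IsTree, ∑ q ∈ cuts G, w #q.1 #q.1ᶜ
      = ∑ ps ∈ antidiagonal (Fintype.card V), (Fintype.card V).choose ps.1 *
          (w ps.1 ps.2 * (ps.1 * ps.2 * (numTrees ps.1 * numTrees ps.2))) := by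
  have hcut (A : Finset V) (uv : V × V) :
      ∑ G : SimpleGraph V with G.IsTree, (if IsCutArc G A uv.1 uv.2 then w #A #Aᶜ else 0)
        = if uv ∈ A ×ˢ Aᶜ then w #A #Aᶜ * (numTrees #A * numTrees #Aᶜ) else 0 := by
    rw [← sum_filter, filter_filter, sum_const, card_filter_isTree_and_isCutArc]
    split_ifs <;> simp [mul_comm]
  have hsubset (A : Finset V) :
      ∑ uv : V × V, (if uv ∈ A ×ˢ Aᶜ then w #A #Aᶜ * (numTrees #A * numTrees #Aᶜ) else 0)
        = w #A #Aᶜ * (#A * #Aᶜ * (numTrees #A * numTrees #Aᶜ)) := by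
    rw [sum_ite_mem, univ_inter, sum_const, card_product, smul_eq_mul]
    ring
  simp_rw [cuts, sum_filter (s := univ (α := Finset V × V × V))]
  rw [sum_comm, Fintype.sum_prod_type]
  simp_rw [hcut, hsubset, card_compl]
  rw [← powerset_univ, Nat.sum_antidiagonal_eq_sum_range_succ_mk]
  exact sum_powerset_apply_card (x := (univ : Finset V)) fun m => w m (Fintype.card V - m) *
    (m * (Fintype.card V - m) * (numTrees m * numTrees (Fintype.card V - m)))

/-- Both sides count the pairs of a tree and one of its cuts. -/
theorem sum_antidiagonal_numTrees (n : ℕ) :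
    ∑ ps ∈ antidiagonal n, n.choose ps.1 * (ps.1 * ps.2 * (numTrees ps.1 * numTrees ps.2))
      = 2 * (n - 1) * numTrees n := by
  classical
  have hcuts := sum_isTree_sum_cuts (V := Fin n) fun _ _ => 1
  simp only [Fintype.card_fin, one_mul, ← card_eq_sum_ones] at hcuts
  rw [← hcuts, sum_congr rfl fun G hG => card_cuts (mem_filter.1 hG).2, sum_const, Fintype.card_fin,
    smul_eq_mul, mul_comm, numTrees, Nat.card_eq_fintype_card, Fintype.card_subtype]

theorem succ_mul_numTrees_succ (n : ℕ) : (n + 1) * numTrees (n + 1) = (n + 1) ^ n := by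
  induction n using Nat.strong_induction_on with
  | _ n ih =>
  obtain _ | n := n
  · simp [numTrees_one]
  have hinner : ∑ ij ∈ antidiagonal n, (n + 2).choose (ij.1 + 1) *
      ((ij.1 + 1) * (ij.2 + 1) * (numTrees (ij.1 + 1) * numTrees (ij.2 + 1)))
      = 2 * (n + 1) * (n + 2) ^ n := by
    rw [← sum_antidiagonal_choose_mul_pow_mul_pow]
    refine sum_congr rfl fun ij hij => ?_
    rw [HasAntidiagonal.mem_antidiagonal] at hij
    rw [mul_assoc, ← ih ij.1 (by omega), ← ih ij.2 (by omega)]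
    ring
  have hrec := sum_antidiagonal_numTrees (n + 2)
  rw [Nat.antidiagonal_succ_succ', sum_cons, sum_cons, sum_map] at hrec
  simp only [Nat.choose_zero_right, zero_mul, mul_zero, Nat.choose_self,
    Function.Embedding.coe_prodMap, Function.Embedding.coeFn_mk, Prod.map_fst, Prod.map_snd,
    Nat.succ_eq_add_one, zero_add, Nat.add_one_sub_one, hinner] at hrec
  rw [Nat.eq_of_mul_eq_mul_left (by positivity) hrec.symm]
  ring

theorem sq_mul_numTrees {n : ℕ} (hn : n ≠ 0) : n ^ 2 * numTrees n = n ^ n := by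
  obtain ⟨n, rfl⟩ := Nat.exists_eq_succ_of_ne_zero hn
  rw [pow_two, mul_assoc, succ_mul_numTrees_succ, ← pow_succ']

theorem totalHeight_eq_sum_antidiagonal (n : ℕ) :
    totalHeight n = ∑ ps ∈ antidiagonal n,
      n.choose ps.1 * (ps.1 ^ 2 * numTrees ps.1 * (ps.2 ^ 2 * numTrees ps.2)) := by
  classical
  have hdist (G : SimpleGraph (Fin n)) (hG : G.Connected ∧ G.IsAcyclic) :
      ∑ a, ∑ b, G.dist a b = ∑ q ∈ cuts G, #q.1 * #q.1ᶜ :=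
    sum_sum_dist_eq_sum_cuts ⟨hG.1, hG.2⟩
  rw [totalHeight, sum_congr rfl fun G hG => hdist G (mem_filter.1 hG).2]
  simp_rw [← isTree_iff]
  rw [sum_isTree_sum_cuts (· * ·), Fintype.card_fin]
  refine sum_congr rfl fun ps _ => ?_
  ring

theorem totalHeight_eq_sum_Ioo (n : ℕ) :
    totalHeight n = ∑ p ∈ Ioo 0 n, n.choose p * (p ^ p * (n - p) ^ (n - p)) := by
  let f (p s : ℕ) : ℕ := n.choose p * (p ^ 2 * numTrees p * (s ^ 2 * numTrees s))
  rw [totalHeight_eq_sum_antidiagonal,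
    sum_antidiagonal_eq_sum_Ioo (f := f) (by simp [f]) (by simp [f])]
  refine sum_congr rfl fun p hp => ?_
  obtain ⟨hp₀, hpn⟩ := mem_Ioo.1 hp
  rw [← sq_mul_numTrees hp₀.ne', ← sq_mul_numTrees (Nat.sub_ne_zero_of_lt hpn)]

end Count

end CayleyTree

/-- For every `n ≥ 1`, the total height of Cayley trees on `n` vertices equals `Aₙ`. -/
theorem totalHeight_eq_Aseq (n : ℕ) (hn : 1 ≤ n) : (totalHeight n : ℚ) = Aseq n := by
  rw [CayleyTree.totalHeight_eq_sum_Ioo, Nat.cast_sum, Aseq]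
  refine Finset.sum_congr rfl fun p hp => ?_
  have hpn : p ≤ n := (Finset.mem_Ioo.1 hp).2.le
  push_cast [Nat.cast_choose ℚ hpn, Nat.cast_sub hpn]
  ring
end

section
/- For every integer n ≥ 1, Σ_{(d_1,…,d_n) ∈ ℕ^n, d_1+⋯+d_n = n} [ n! − Σ_{j=2}^n (j−2)!·(n−j)!·e_j(d_1,…,d_n) ] / (d_1!·d_2!···d_n!) = A_n/n + n^{n−1}, where e_j denotes the j-th elementary symmetric polynomial in the variables d_1,…,d_n. -/
/-- The `j`-th elementary symmetric polynomial of the tuple `d = (d₁,…,dₙ)`,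
as a rational number: `e_j(d) = Σ_{|t| = j} Π_{i ∈ t} dᵢ`. -/
noncomputable def esym {n : ℕ} (j : ℕ) (d : Fin n → ℕ) : ℚ :=
  ∑ t ∈ Finset.univ.powersetCard j, ∏ i ∈ t, (d i : ℚ)

/-!
Extracting coefficients from `(X * exp) ^ |t| * exp ^ (n - |t|)` evaluates the sum of
`∏ i ∈ t, dᵢ / ∏ dᵢ!` over all weak compositions `d` of `n`, and hence the sum of `e_j(d) / ∏ dᵢ!`.
With `q_j = n (n - 1) ⋯ (n - j + 1) / n ^ j`, the left-hand side becomes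
`n ^ n * (1 - ∑ j ≥ 2, q_j / (j (j - 1)))`. Since `q_{j+1} = q_j (1 - j / n)`, the inner sum
telescopes to `1 - Q(n) / n`, where `Q(n) = ∑ j ≥ 1, q_j`. On the other side,
`A_n = n ^ n * (Q(n) - 1)`: expanding each `(n - p) ^ (n - p)` in powers of `n` and `p`, the
coefficient of `n ^ (n - k)` becomes a multiple of the `k`-th finite difference of `p ^ k`, that is,
of `k!`.
-/

open Finset

section AbelIdentity

variable {R : Type*} [CommRing R]

lemma sum_neg_one_pow_mul_choose_mul_add_pow_self (k : ℕ) (x : R) :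
    ∑ p ∈ range (k + 1), (-1) ^ (k - p) * (k.choose p : R) * (x + p) ^ k = (k.factorial : R) := by
  have h := congrFun (fwdDiff_iter_eq_factorial (R := R) (n := k)) x
  rw [fwdDiff_iter_eq_sum_shift] at h
  simpa [zsmul_eq_mul] using h

lemma choose_mul_add_pow_sub {S : Type*} [CommSemiring S] (a b : S) (n p : ℕ) :
    (n.choose p : S) * (a + b) ^ (n - p)
      = ∑ k ∈ Ico p (n + 1), (n.choose k * k.choose p : S) * a ^ (k - p) * b ^ (n - k) := by
  obtain hnp | hpn := lt_or_ge n p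
  · simp [Nat.choose_eq_zero_of_lt hnp, Ico_eq_empty_of_le (Nat.succ_le_of_lt hnp)]
  rw [add_pow, mul_sum, sum_Ico_eq_sum_range, Nat.sub_add_comm hpn]
  refine sum_congr rfl fun i _ => ?_
  have h := congrArg (Nat.cast (R := S)) (Nat.choose_mul (n := n) (Nat.le_add_right p i))
  rw [Nat.add_sub_cancel_left] at h
  push_cast at h
  rw [h, Nat.add_sub_cancel_left, Nat.sub_add_eq]
  ring

theorem sum_choose_mul_add_pow_mul_sub_pow (n : ℕ) (x y : R) :
    ∑ p ∈ range (n + 1), (n.choose p : R) * (x + p) ^ p * (y - p) ^ (n - p)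
      = ∑ k ∈ range (n + 1), (n.descFactorial k : R) * (x + y) ^ (n - k) := by
  have expand (p : ℕ) : (n.choose p : R) * (x + p) ^ p * (y - p) ^ (n - p)
      = ∑ k ∈ Ico p (n + 1), n.choose k * (x + y) ^ (n - k) *
          ((-1) ^ (k - p) * k.choose p * (x + p) ^ k) := by
    rw [mul_right_comm, show y - (p : R) = -(x + p) + (x + y) by ring,
      choose_mul_add_pow_sub, sum_mul]
    refine sum_congr rfl fun k hk => ?_
    rw [neg_pow, ← pow_sub_mul_pow (x + (p : R)) (mem_Ico.1 hk).1]
    ring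
  simp only [expand, range_eq_Ico]
  rw [sum_Ico_Ico_comm]
  refine sum_congr rfl fun k _ => ?_
  rw [← mul_sum, ← range_eq_Ico, sum_neg_one_pow_mul_choose_mul_add_pow_self,
    Nat.descFactorial_eq_factorial_mul_choose]
  push_cast
  ring

end AbelIdentity

section RamanujanQ

/-- The Ramanujan–Knuth function `Q(n) = ∑ j ≥ 1, n (n - 1) ⋯ (n - j + 1) / n ^ j`, through which
both sides of the main identity are expressed; the terms with `j > n` vanish and are omitted. -/
def ramanujanQ (n : ℕ) : ℚ :=
  ∑ j ∈ Icc 1 n, (n.descFactorial j : ℚ) / n ^ j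

lemma descFactorial_succ_div_pow_succ {n : ℕ} (hn : n ≠ 0) (j : ℕ) :
    (n.descFactorial (j + 1) : ℚ) / n ^ (j + 1)
      = (n.descFactorial j : ℚ) / n ^ j * (1 - j / n) := by
  have hn' : (n : ℚ) ≠ 0 := Nat.cast_ne_zero.2 hn
  obtain hnj | hjn := lt_or_ge n j
  · simp [Nat.descFactorial_of_lt, hnj]
  · rw [Nat.descFactorial_succ, Nat.cast_mul, Nat.cast_sub hjn, pow_succ]
    field_simp

theorem sum_descFactorial_div_pow_div_mul_sub_one {n : ℕ} (hn : 1 ≤ n) :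
    ∑ j ∈ Icc 2 n, (n.descFactorial j : ℚ) / n ^ j / (j * (j - 1)) = 1 - ramanujanQ n / n := by
  have hn' : (n : ℚ) ≠ 0 := by positivity
  let q : ℕ → ℚ := fun j => (n.descFactorial j : ℚ) / n ^ j
  have hq_one : q 1 = 1 := by simp [q, hn']
  have telescope : ∀ j ∈ Ico 1 n, q (j + 1) / ((j + 1 : ℕ) * ((j + 1 : ℕ) - 1))
      = -(q (j + 1) / (j + 1 : ℕ) - q j / j) - q j / n := by
    intro j hj
    have hj' : (j : ℚ) ≠ 0 := Nat.cast_ne_zero.2 (Nat.ne_zero_of_lt (mem_Ico.1 hj).1)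
    have hq : q (j + 1) = q j * (1 - j / n) :=
      descFactorial_succ_div_pow_succ (Nat.ne_zero_of_lt hn) j
    rw [hq]
    push_cast
    rw [add_sub_cancel_right]
    field_simp
    ring
  calc ∑ j ∈ Icc 2 n, q j / (j * (j - 1))
      = ∑ j ∈ Ico 1 n, q (j + 1) / ((j + 1 : ℕ) * ((j + 1 : ℕ) - 1)) := by
        rw [sum_Ico_add' (fun j : ℕ => q j / (j * (j - 1))), Ico_add_one_right_eq_Icc]
    _ = -(q n / n - q 1 / (1 : ℕ)) - (∑ j ∈ Ico 1 n, q j) / n := by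
        rw [sum_congr rfl telescope, sum_sub_distrib, sum_neg_distrib,
          sum_Ico_sub (fun j : ℕ => q j / j) hn, sum_div]
    _ = 1 - (∑ j ∈ Ico 1 (n + 1), q j) / n := by
        rw [sum_Ico_succ_top hn, hq_one, Nat.cast_one]
        ring

theorem Aseq_eq_pow_mul_ramanujanQ_sub_one {n : ℕ} (hn : 1 ≤ n) :
    Aseq n = (n : ℚ) ^ n * (ramanujanQ n - 1) := by
  have hn' : (n : ℚ) ≠ 0 := by positivity
  have abel := sum_choose_mul_add_pow_mul_sub_pow n 0 (n : ℚ)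
  simp only [zero_add] at abel
  have lhs : ∑ p ∈ range (n + 1), (n.choose p : ℚ) * p ^ p * (n - p) ^ (n - p)
      = Aseq n + 2 * n ^ n := by
    have hA : Aseq n = ∑ p ∈ Ioo 0 n, (n.choose p : ℚ) * p ^ p * (n - p) ^ (n - p) :=
      sum_congr rfl fun p hp => by rw [Nat.cast_choose ℚ (mem_Ioo.1 hp).2.le]
    rw [sum_range_succ, range_eq_Ico, ← Ioo_insert_left hn, sum_insert left_notMem_Ioo, ← hA]
    simp only [Nat.choose_zero_right, Nat.choose_self, Nat.cast_one, Nat.cast_zero, pow_zero,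
      sub_zero, sub_self, Nat.sub_zero, Nat.sub_self]
    ring
  have rhs : ∑ k ∈ range (n + 1), (n.descFactorial k : ℚ) * n ^ (n - k)
      = n ^ n + n ^ n * ramanujanQ n := by
    have hQ : ∑ k ∈ Icc 1 n, (n.descFactorial k : ℚ) * n ^ (n - k) = n ^ n * ramanujanQ n := by
      rw [ramanujanQ, mul_sum]
      refine sum_congr rfl fun k hk => ?_
      rw [pow_sub₀ _ hn' (mem_Icc.1 hk).2]
      ring
    rw [range_eq_Ico, sum_eq_sum_Ico_succ_bot (Nat.add_one_pos n), zero_add,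
      Ico_add_one_right_eq_Icc, hQ]
    simp
  linarith

end RamanujanQ

section Compositions

open PowerSeries

lemma filter_piFinset_range_sum_eq_piAntidiag {ι : Type*} [Fintype ι] [DecidableEq ι] (n : ℕ) :
    (Fintype.piFinset fun _ : ι => range (n + 1)).filter (fun d => ∑ i, d i = n)
      = piAntidiag univ n := by
  ext d
  simp only [mem_filter, Fintype.mem_piFinset, mem_range, mem_piAntidiag, mem_univ, implies_true,
    and_true, and_iff_right_iff_imp]
  rintro rfl i
  exact Nat.lt_succ_of_le (single_le_sum_of_canonicallyOrdered (mem_univ i))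

lemma coeff_prod_eq_sum_piAntidiag {ι R : Type*} [DecidableEq ι] [CommSemiring R]
    (f : ι → PowerSeries R) (s : Finset ι) (n : ℕ) :
    coeff n (∏ i ∈ s, f i) = ∑ d ∈ piAntidiag s n, ∏ i ∈ s, coeff (d i) (f i) := by
  rw [PowerSeries.coeff_prod, finsuppAntidiag, sum_map]
  exact sum_attach (piAntidiag s n) fun d => ∏ i ∈ s, coeff (d i) (f i)

variable {K : Type*} [Field K] [CharZero K]

lemma coeff_X_mul_exp (n : ℕ) : coeff n (X * exp K) = n / (n.factorial : K) := by
  cases n with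
  | zero => simp
  | succ n =>
    have : (n : K) + 1 ≠ 0 := n.cast_add_one_ne_zero
    rw [coeff_succ_X_mul, coeff_exp, Nat.factorial_succ, map_div₀, map_one, map_natCast]
    push_cast
    field_simp

theorem sum_piAntidiag_prod_div_prod_factorial {ι : Type*} [DecidableEq ι] {s t : Finset ι}
    (hts : t ⊆ s) {n : ℕ} (htn : #t ≤ n) :
    ∑ d ∈ piAntidiag s n, (∏ i ∈ t, (d i : K)) / ∏ i ∈ s, ((d i).factorial : K)
      = (#s : K) ^ (n - #t) / ((n - #t).factorial : K) := by
  let f : ι → PowerSeries K := fun i => (if i ∈ t then X else 1) * exp K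
  have prod_f : ∏ i ∈ s, f i = X ^ #t * exp K ^ #s := by
    simp only [f, prod_mul_distrib, prod_ite_mem, inter_eq_right.2 hts, prod_const]
  have coeff_f (i : ι) (m : ℕ) :
      coeff m (f i) = (if i ∈ t then (m : K) else 1) / (m.factorial : K) := by
    by_cases hi : i ∈ t
    · simp only [f, if_pos hi, coeff_X_mul_exp]
    · simp [f, hi, coeff_exp]
  calc ∑ d ∈ piAntidiag s n, (∏ i ∈ t, (d i : K)) / ∏ i ∈ s, ((d i).factorial : K)
      = coeff n (∏ i ∈ s, f i) := by
        simp only [coeff_prod_eq_sum_piAntidiag, coeff_f, prod_div_distrib, prod_ite_mem,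
          inter_eq_right.2 hts]
    _ = (#s : K) ^ (n - #t) / ((n - #t).factorial : K) := by
        rw [prod_f, coeff_X_pow_mul', if_pos htn, exp_pow_eq_rescale_exp, coeff_rescale, coeff_exp]
        simp [div_eq_mul_inv]

theorem sum_piAntidiag_factorial_div_prod_factorial {ι : Type*} [DecidableEq ι] (s : Finset ι)
    (n : ℕ) :
    ∑ d ∈ piAntidiag s n, (n.factorial : K) / ∏ i ∈ s, ((d i).factorial : K) = #s ^ n := by
  have hn : (n.factorial : K) ≠ 0 := Nat.cast_ne_zero.2 n.factorial_ne_zero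
  have h := sum_piAntidiag_prod_div_prod_factorial (K := K) (empty_subset s) n.zero_le
  simp only [prod_empty, card_empty, Nat.sub_zero] at h
  simp only [div_eq_mul_one_div (n.factorial : K), ← mul_sum, h]
  exact mul_div_cancel₀ _ hn

theorem sum_piAntidiag_esym_div_prod_factorial {m n j : ℕ} (hj : j ≤ n) :
    ∑ d ∈ piAntidiag (univ : Finset (Fin m)) n, esym j d / ∏ i, ((d i).factorial : ℚ)
      = m.choose j * ((m : ℚ) ^ (n - j) / ((n - j).factorial : ℚ)) := by
  simp only [esym, sum_div]
  rw [sum_comm]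
  have summand : ∀ t ∈ powersetCard j (univ : Finset (Fin m)),
      ∑ d ∈ piAntidiag univ n, (∏ i ∈ t, (d i : ℚ)) / ∏ i, ((d i).factorial : ℚ)
        = (m : ℚ) ^ (n - j) / ((n - j).factorial : ℚ) := by
    intro t ht
    obtain rfl := (mem_powersetCard.1 ht).2
    simpa using sum_piAntidiag_prod_div_prod_factorial (K := ℚ) (subset_univ t) hj
  rw [sum_congr rfl summand]
  simp

lemma factorial_mul_sum_piAntidiag_esym {n j : ℕ} (hj : 2 ≤ j) (hjn : j ≤ n) :
    ((j - 2).factorial : ℚ) * (n - j).factorial *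
        ∑ d ∈ piAntidiag (univ : Finset (Fin n)) n, esym j d / ∏ i, ((d i).factorial : ℚ)
      = n ^ n * ((n.descFactorial j : ℚ) / n ^ j / (j * (j - 1))) := by
  have hn : (n : ℚ) ≠ 0 := Nat.cast_ne_zero.2 (by lia)
  obtain ⟨k, rfl⟩ := Nat.exists_eq_add_of_le' hj
  have hfac : ((n - (k + 2)).factorial : ℚ) ≠ 0 := Nat.cast_ne_zero.2 (Nat.factorial_ne_zero _)
  have hk : (k : ℚ) + 2 - 1 = k + 1 := by ring
  rw [sum_piAntidiag_esym_div_prod_factorial hjn, pow_sub₀ _ hn hjn,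
    Nat.descFactorial_eq_factorial_mul_choose, Nat.add_sub_cancel, Nat.factorial_succ,
    Nat.factorial_succ]
  push_cast
  rw [hk]
  field_simp
  ring

theorem sum_piAntidiag_sum_factorial_mul_esym {n : ℕ} (hn : 1 ≤ n) :
    ∑ d ∈ piAntidiag (univ : Finset (Fin n)) n,
        (∑ j ∈ Icc 2 n, ((j - 2).factorial : ℚ) * (n - j).factorial * esym j d) /
          ∏ i, ((d i).factorial : ℚ)
      = n ^ n * (1 - ramanujanQ n / n) := by
  simp only [sum_div, mul_div_assoc]
  rw [sum_comm, ← sum_descFactorial_div_pow_div_mul_sub_one hn, mul_sum]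
  refine sum_congr rfl fun j hj => ?_
  rw [← mul_sum, factorial_mul_sum_piAntidiag_esym (mem_Icc.1 hj).1 (mem_Icc.1 hj).2]

end Compositions

/-- For every `n ≥ 1`,
`Σ_{(d₁,…,dₙ) ∈ ℕⁿ, Σdᵢ = n} [n! − Σ_{j=2}^n (j−2)!(n−j)!·e_j(d)] / (d₁!⋯dₙ!)
  = Aₙ/n + n^{n−1}`. -/
theorem genus_one_sum (n : ℕ) (hn : 1 ≤ n) :
    ∑ d ∈ (Fintype.piFinset fun _ : Fin n => Finset.range (n + 1)).filter
        (fun d => ∑ i, d i = n),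
      ((n.factorial : ℚ) -
          ∑ j ∈ Finset.Icc 2 n,
            ((j - 2).factorial : ℚ) * ((n - j).factorial : ℚ) * esym j d) /
        ∏ i, ((d i).factorial : ℚ)
      = Aseq n / n + (n : ℚ) ^ (n - 1) := by
  have hn' : (n : ℚ) ≠ 0 := by positivity
  simp only [filter_piFinset_range_sum_eq_piAntidiag, sub_div, sum_sub_distrib]
  rw [sum_piAntidiag_factorial_div_prod_factorial, sum_piAntidiag_sum_factorial_mul_esym hn,
    Aseq_eq_pow_mul_ramanujanQ_sub_one hn, card_univ, Fintype.card_fin, pow_sub₀ _ hn' hn]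
  field_simp
  ring
end

section
/- Let g ≥ 2 be an integer and let B and B′ be two brackets of genus g with rational values, both satisfying the string relation and the dilaton relation. If B(m) = B′(m) for every finite multiset m of nonnegative integers all of whose elements are ≥ 2, then B = B′; that is, the values of a bracket satisfying the string and dilaton relations are completely determined by its values on multisets with all parts at least 2. -/
/-!
Read from left to right, the string relation removes a part `0` and the dilaton relation removes a
part `1`. Each expresses a value through values on multisets with one element fewer, so repeating
them ends, by induction on the cardinality, at multisets all of whose parts are at least `2`.
-/

/-- A bracket `B` (a function from finite multisets of nonnegative integers to `ℚ`)
satisfies the string relation if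
`B(m + {0}) = Σ_{d ∈ m, d ≥ 1} B(m − {d} + {d−1})`,
the sum being over the elements of `m` counted with multiplicity, omitting those
equal to `0`. -/
def StringRel (B : Multiset ℕ → ℚ) : Prop :=
  ∀ m : Multiset ℕ,
    B (0 ::ₘ m) = (m.map fun d => if d = 0 then 0 else B ((d - 1) ::ₘ m.erase d)).sum

/-- A bracket `B` of genus `g` satisfies the dilaton relation if
`B(m + {1}) = (2g − 2 + |m|)·B(m)` for every finite multiset `m`. -/
def DilatonRel (g : ℕ) (B : Multiset ℕ → ℚ) : Prop :=
  ∀ m : Multiset ℕ, B (1 ::ₘ m) = (2 * (g : ℚ) - 2 + Multiset.card m) * B m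

theorem card_pred_cons_erase {m : Multiset ℕ} {d : ℕ} (hd : d ∈ m) :
    ((d - 1) ::ₘ m.erase d).card = m.card := by
  rw [Multiset.card_cons, Multiset.card_erase_add_one hd]

theorem string_dilaton_induction {p : Multiset ℕ → Prop}
    (initial : ∀ m : Multiset ℕ, (∀ d ∈ m, 2 ≤ d) → p m)
    (zero_cons : ∀ m : Multiset ℕ,
      (∀ d ∈ m, d ≠ 0 → p ((d - 1) ::ₘ m.erase d)) → p (0 ::ₘ m))
    (one_cons : ∀ m : Multiset ℕ, p m → p (1 ::ₘ m)) (m : Multiset ℕ) : p m := by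
  induction hn : m.card using Nat.strong_induction_on generalizing m with
  | _ n ih =>
    subst hn
    by_cases h0 : 0 ∈ m
    · obtain ⟨t, rfl⟩ := Multiset.exists_cons_of_mem h0
      refine zero_cons t fun d hd _ => ih t.card ?_ _ (card_pred_cons_erase hd)
      exact Multiset.card_lt_card (Multiset.lt_cons_self t 0)
    by_cases h1 : 1 ∈ m
    · obtain ⟨t, rfl⟩ := Multiset.exists_cons_of_mem h1
      exact one_cons t (ih t.card (Multiset.card_lt_card (Multiset.lt_cons_self t 1)) t rfl)
    refine initial m fun d hd => (Nat.two_le_iff d).2 ⟨?_, ?_⟩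
    · exact ne_of_mem_of_not_mem hd h0
    · exact ne_of_mem_of_not_mem hd h1

theorem StringRel.zero_cons_congr {B B' : Multiset ℕ → ℚ} (hB : StringRel B) (hB' : StringRel B')
    {m : Multiset ℕ}
    (h : ∀ d ∈ m, d ≠ 0 → B ((d - 1) ::ₘ m.erase d) = B' ((d - 1) ::ₘ m.erase d)) :
    B (0 ::ₘ m) = B' (0 ::ₘ m) := by
  rw [hB m, hB' m]
  congr 1
  refine Multiset.map_congr rfl fun d hd => ?_
  split_ifs with hd0
  · rfl
  · exact h d hd hd0

theorem DilatonRel.one_cons_congr {g : ℕ} {B B' : Multiset ℕ → ℚ} (hB : DilatonRel g B)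
    (hB' : DilatonRel g B') {m : Multiset ℕ} (h : B m = B' m) : B (1 ::ₘ m) = B' (1 ::ₘ m) := by
  rw [hB m, hB' m, h]

theorem bracket_determined_by_initial_values_general (g : ℕ) (B B' : Multiset ℕ → ℚ)
    (hstr : StringRel B) (hdil : DilatonRel g B)
    (hstr' : StringRel B') (hdil' : DilatonRel g B')
    (hinit : ∀ m : Multiset ℕ, (∀ d ∈ m, 2 ≤ d) → B m = B' m) :
    B = B' :=
  funext <| string_dilaton_induction hinit
    (fun _ h => hstr.zero_cons_congr hstr' h) (fun _ h => hdil.one_cons_congr hdil' h)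

/-- Two genus-`g` (`g ≥ 2`) brackets satisfying the string and dilaton relations and
agreeing on all multisets whose elements are all `≥ 2` are equal: a bracket is
determined by its values on multisets with all parts at least `2`. -/
theorem bracket_determined_by_initial_values (g : ℕ) (hg : 2 ≤ g)
    (B B' : Multiset ℕ → ℚ)
    (hstr : StringRel B) (hdil : DilatonRel g B)
    (hstr' : StringRel B') (hdil' : DilatonRel g B')
    (hinit : ∀ m : Multiset ℕ, (∀ d ∈ m, 2 ≤ d) → B m = B' m) :
    B = B' :=
  bracket_determined_by_initial_values_general g B B' hstr hdil hstr' hdil' hinit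
end

section
/- The formal power series Σ_{n≥1} (n^{n−3}/n!) q^n and Σ_{n≥1} (n^{n−2}/n!) q^n (the exponential generating function of Cayley trees) both lie in the algebra 𝒜. -/
/-!
Write `θ = q d/dq`. An identity of Abel type gives `Y (1 + Z) = Z`; since `Z = θ Y`, this says
`(1 - Y) θ Y = Y`. For a polynomial `Q` it follows that `θ (Q(Y)) = Q'(Y) Y / (1 - Y)`, so
`θ f = Y S(Y)` is solved within `ℚ[Y]` by taking `Q` with `Q' = (1 - X) S`. Thus `ℚ[Y]` contains
every series whose image under `θ` it contains. As `θ` turns `Σ n^{n-k-1}/n! qⁿ` into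
`Σ n^{n-k}/n! qⁿ`, induction from `Y` (the case `k = 1`) shows that all of these with `k ≥ 1`
are polynomials in `Y` alone.
-/

/-- `Y = Σ_{n≥1} (n^{n-1}/n!) qⁿ` as a formal power series over `ℚ`. -/
noncomputable def Yq : PowerSeries ℚ :=
  PowerSeries.mk fun n => if n = 0 then 0 else (n : ℚ) ^ (n - 1) / n.factorial

open PowerSeries

section AbelIdentity

open Finset

variable {R : Type*} [CommRing R]

lemma sum_Ico_neg_one_pow_mul_choose_mul_pow_eq_zero {k m : ℕ} (hk : k ≠ 0) (hkm : k < m) :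
    ∑ j ∈ Ico 1 (m + 1), (-1 : R) ^ (m - j) * m.choose j * (j : R) ^ k = 0 := by
  have hdiff := congrFun (fwdDiff_iter_pow_eq_zero_of_lt (R := R) hkm) 0
  rw [fwdDiff_iter_eq_sum_shift, range_eq_Ico, sum_eq_sum_Ico_succ_bot (by omega)] at hdiff
  simpa [hk] using hdiff

lemma choose_mul_pow_mul_sub_pow_eq_sum (y : R) {n j : ℕ} (hj : 1 ≤ j) (hjn : j ≤ n) :
    (n.choose j : R) * (j : R) ^ (j - 1) * (y - j) ^ (n - j) =
      ∑ m ∈ Ico j (n + 1), (n.choose m : R) * y ^ (n - m) *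
        ((-1) ^ (m - j) * m.choose j * (j : R) ^ (m - 1)) := by
  rw [sum_Ico_eq_sum_range, show n + 1 - j = n - j + 1 by omega, sub_eq_neg_add, add_pow, mul_sum]
  refine sum_congr rfl fun i _ ↦ ?_
  have hchoose : (n.choose (j + i) : R) * (j + i).choose j = n.choose j * (n - j).choose i := by
    have := Nat.choose_mul (n := n) (Nat.le_add_right j i)
    rw [Nat.add_sub_cancel_left] at this
    exact_mod_cast congrArg (Nat.cast (R := R)) this
  rw [Nat.add_sub_cancel_left, show j + i - 1 = (j - 1) + i by omega, ← Nat.sub_sub, neg_pow,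
    pow_add]
  linear_combination (-y ^ (n - j - i) * (-1) ^ i * (j : R) ^ (j - 1) * (j : R) ^ i) * hchoose

/-- The coefficient of `x` in Abel's identity
`Σ_{0≤j≤n} (n choose j) x (x + j)^{j-1} (y - j)^{n-j} = (x + y)^n`. -/
lemma sum_Ico_choose_mul_pow_mul_sub_pow (y : R) (n : ℕ) :
    ∑ j ∈ Ico 1 (n + 1), (n.choose j : R) * (j : R) ^ (j - 1) * (y - j) ^ (n - j) =
      n * y ^ (n - 1) := by
  calc
    _ = ∑ j ∈ Ico 1 (n + 1), ∑ m ∈ Ico j (n + 1), (n.choose m : R) * y ^ (n - m) *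
          ((-1) ^ (m - j) * m.choose j * (j : R) ^ (m - 1)) := by
      refine sum_congr rfl fun j hj ↦ ?_
      have := mem_Ico.1 hj
      exact choose_mul_pow_mul_sub_pow_eq_sum y (by omega) (by omega)
    _ = ∑ m ∈ Ico 1 (n + 1), (n.choose m : R) * y ^ (n - m) *
          ∑ j ∈ Ico 1 (m + 1), (-1) ^ (m - j) * m.choose j * (j : R) ^ (m - 1) := by
      simp only [sum_Ico_Ico_comm, mul_sum]
    _ = n * y ^ (n - 1) := by
      rw [sum_eq_single 1]
      · simp
      · intro m hm hm1
        have := mem_Ico.1 hm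
        rw [sum_Ico_neg_one_pow_mul_choose_mul_pow_eq_zero (by omega) (by omega), mul_zero]
      · intro hn
        obtain rfl : n = 0 := by simpa using hn
        simp

end AbelIdentity

section EulerOperator

variable {R : Type*} [CommRing R]

lemma exists_eq_add_C_of_X_mul_derivative_eq [IsAddTorsionFree R] {f g : R⟦X⟧}
    (h : X * d⁄dX R f = X * d⁄dX R g) : ∃ c, f = g + C c := by
  refine ⟨constantCoeff f - constantCoeff g, derivative.ext ?_ ?_⟩
  · simpa using X_mul_cancel h
  · simp

lemma exists_eq_mul_aeval_of_mem_adjoin {f y : R⟦X⟧} (hf : f ∈ Algebra.adjoin R {y})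
    (hf₀ : constantCoeff f = 0) (hy₀ : constantCoeff y = 0) :
    ∃ S : Polynomial R, f = y * Polynomial.aeval y S := by
  rw [Algebra.adjoin_singleton_eq_range_aeval] at hf
  obtain ⟨P, rfl : Polynomial.aeval y P = f⟩ := hf
  have hP : Polynomial.aeval y P = y * Polynomial.aeval y P.divX + C (P.coeff 0) := by
    conv_lhs => rw [← P.X_mul_divX_add, map_add, map_mul, Polynomial.aeval_X, Polynomial.aeval_C]
    rw [algebraMap_eq]
  have hcoeff : P.coeff 0 = 0 := by
    simpa [hf₀, hy₀] using (congrArg constantCoeff hP).symm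
  exact ⟨P.divX, by simpa [hcoeff] using hP⟩

variable {K : Type*} [Field K] [CharZero K]

lemma polynomial_derivative_surjective :
    Function.Surjective (Polynomial.derivative (R := K)) := by
  intro P
  induction P using Polynomial.induction_on' with
  | add P Q hP hQ =>
    obtain ⟨P', rfl⟩ := hP
    obtain ⟨Q', rfl⟩ := hQ
    exact ⟨P' + Q', Polynomial.derivative_add⟩
  | monomial n a =>
    refine ⟨Polynomial.monomial (n + 1) (a / (n + 1)), ?_⟩
    rw [Polynomial.derivative_monomial, Nat.add_sub_cancel, Nat.cast_succ,
      div_mul_cancel₀ _ n.cast_add_one_ne_zero]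

lemma mem_adjoin_of_X_mul_derivative_mem {f y : K⟦X⟧} (hy : (1 - y) * (X * d⁄dX K y) = y)
    (hf : X * d⁄dX K f ∈ Algebra.adjoin K {y}) : f ∈ Algebra.adjoin K {y} := by
  have hy₀ : constantCoeff y = 0 := by simpa using (congrArg constantCoeff hy).symm
  obtain ⟨S, hS⟩ := exists_eq_mul_aeval_of_mem_adjoin hf (by simp) hy₀
  obtain ⟨Q, hQ⟩ := polynomial_derivative_surjective ((1 - Polynomial.X) * S)
  have hfQ : X * d⁄dX K f = X * d⁄dX K (Polynomial.aeval y Q) := by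
    calc
      X * d⁄dX K f = (1 - y) * (X * d⁄dX K y) * Polynomial.aeval y S := by rw [hS, hy]
      _ = X * ((1 - y) * Polynomial.aeval y S * d⁄dX K y) := by ring
      _ = X * d⁄dX K (Polynomial.aeval y Q) := by simp [Derivation.map_aeval, hQ]
  obtain ⟨c, rfl⟩ := exists_eq_add_C_of_X_mul_derivative_eq hfQ
  exact add_mem (Polynomial.aeval_mem_adjoin_singleton K y) (Subalgebra.algebraMap_mem _ c)

end EulerOperator

/-- The series `Σ_{n≥1} (n^{n-k}/n!) qⁿ` over `ℚ`. The cases `k = 0` and `k = 1` are `Zq` and `Yq`,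
and `q d/dq` lowers `k` by one. The subtraction is that of `ℤ`, so exponents may be negative. -/
noncomputable def selfPowSeries (k : ℤ) : ℚ⟦X⟧ :=
  PowerSeries.mk fun n => if n = 0 then 0 else (n : ℚ) ^ ((n : ℤ) - k) / n.factorial

lemma selfPowSeries_zero : selfPowSeries 0 = Zq := by
  simp [selfPowSeries, Zq]

lemma selfPowSeries_one : selfPowSeries 1 = Yq := by
  ext n
  rcases n with _ | n
  · simp [selfPowSeries, Yq]
  · simp [selfPowSeries, Yq, ← zpow_natCast]

lemma X_mul_derivative_selfPowSeries_add_one (k : ℤ) :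
    X * d⁄dX ℚ (selfPowSeries (k + 1)) = selfPowSeries k := by
  ext n
  rcases n with _ | n
  · simp [selfPowSeries]
  · have hn : ((n + 1 : ℕ) : ℚ) ≠ 0 := by positivity
    rw [coeff_succ_X_mul, coeff_derivative, selfPowSeries, selfPowSeries, coeff_mk, coeff_mk,
      if_neg n.succ_ne_zero, if_neg n.succ_ne_zero,
      show ((n + 1 : ℕ) : ℤ) - k = ((n + 1 : ℕ) : ℤ) - (k + 1) + 1 by ring, zpow_add_one₀ hn]
    push_cast
    ring

lemma X_mul_derivative_Yq : X * d⁄dX ℚ Yq = Zq := by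
  rw [← selfPowSeries_one, ← selfPowSeries_zero]
  exact X_mul_derivative_selfPowSeries_add_one 0

lemma one_add_Zq : 1 + Zq = PowerSeries.mk fun n ↦ (n : ℚ) ^ n / n.factorial := by
  ext n
  rcases n with _ | n <;> simp [Zq, coeff_one]

lemma Yq_mul_one_add_Zq : Yq * (1 + Zq) = Zq := by
  ext n
  rw [one_add_Zq, coeff_mul, Finset.Nat.sum_antidiagonal_eq_sum_range_succ_mk,
    Finset.range_eq_Ico, Finset.sum_eq_sum_Ico_succ_bot n.succ_pos]
  rcases eq_or_ne n 0 with rfl | hn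
  · simp [Yq, Zq]
  have habel := sum_Ico_choose_mul_pow_mul_sub_pow (n : ℚ) n
  rw [mul_pow_sub_one hn] at habel
  simp only [Yq, Zq, coeff_mk, if_true, zero_mul, zero_add, if_neg hn]
  rw [← habel, Finset.sum_div]
  refine Finset.sum_congr rfl fun j hj ↦ ?_
  obtain ⟨hj, hj_lt⟩ := Finset.mem_Ico.1 hj
  have hjn : j ≤ n := Nat.lt_succ_iff.1 hj_lt
  rw [if_neg (by omega), Nat.cast_choose ℚ hjn, Nat.cast_sub hjn]
  field_simp

lemma one_sub_Yq_mul_X_mul_derivative_Yq : (1 - Yq) * (X * d⁄dX ℚ Yq) = Yq := by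
  rw [X_mul_derivative_Yq]
  linear_combination -Yq_mul_one_add_Zq

theorem series_nn3_nn2_mem_adjoin_general {k : ℤ} (hk : 1 ≤ k) :
    selfPowSeries k ∈ Algebra.adjoin ℚ {Yq} := by
  induction k, hk using Int.leInduction with
  | base => simpa only [selfPowSeries_one] using Algebra.self_mem_adjoin_singleton ℚ Yq
  | succ k _ ih =>
    apply mem_adjoin_of_X_mul_derivative_mem one_sub_Yq_mul_X_mul_derivative_Yq
    rwa [X_mul_derivative_selfPowSeries_add_one]

/-- The series `Σ_{n≥1} (n^{n-3}/n!) qⁿ` and `Σ_{n≥1} (n^{n-2}/n!) qⁿ` lie in `𝒜 = ℚ[Y,Z]`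
(here `n^{n-3}` and `n^{n-2}` are rational numbers, the exponents being integers). -/
theorem series_nn3_nn2_mem_adjoin :
    (PowerSeries.mk fun n =>
        if n = 0 then 0 else (n : ℚ) ^ ((n : ℤ) - 3) / n.factorial) ∈
      Algebra.adjoin ℚ {Yq, Zq} ∧
    (PowerSeries.mk fun n =>
        if n = 0 then 0 else (n : ℚ) ^ ((n : ℤ) - 2) / n.factorial) ∈
      Algebra.adjoin ℚ {Yq, Zq} := by
  have hle : Algebra.adjoin ℚ {Yq} ≤ Algebra.adjoin ℚ {Yq, Zq} := Algebra.adjoin_mono (by simp)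
  exact ⟨hle (series_nn3_nn2_mem_adjoin_general (k := 3) (by norm_num)),
    hle (series_nn3_nn2_mem_adjoin_general (k := 2) (by norm_num))⟩
end
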